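/- arXiv:1707.06028 — 2 statements merged into one kernel-verified Lean document; each statement's English description precedes it below -/
import Mathlib

section
/- Let n ≥ 1 be an integer, let F ⊆ ℝⁿ be a set of finite perimeter, and let r₀ > 0 and ε > 0 satisfy |F| ≤ |B| (ε/2)ⁿ. Then there exists r ∈ (r₀ − ε, r₀) such that H^{n−1}(∂*F ∩ B_r) ≥ H^{n−1}(F¹ ∩ ∂B_r), where ∂*F is the essential boundary of F, F¹ is the set of points of Lebesgue density 1 of F, B_r is the open ball of radius r centered at 0, and ∂B_r is the sphere of radius r centered at 0. -/
open MeasureTheory Metric Filter ENNReal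

noncomputable section

/-- The Lebesgue density of `E` at `x` equals `d`. -/
def HasDensity {n : ℕ} (E : Set (EuclideanSpace ℝ (Fin n)))
    (x : EuclideanSpace ℝ (Fin n)) (d : ℝ) : Prop :=
  Filter.Tendsto
    (fun r : ℝ => (volume (E ∩ Metric.ball x r)).toReal / (volume (Metric.ball x r)).toReal)
    (nhdsWithin 0 (Set.Ioi 0)) (nhds d)

/-- The essential boundary of `E`: points where `E` has neither density 0 nor density 1. -/
def essBoundary {n : ℕ} (E : Set (EuclideanSpace ℝ (Fin n))) :
    Set (EuclideanSpace ℝ (Fin n)) :=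
  {x | ¬ HasDensity E x 0 ∧ ¬ HasDensity E x 1}

/-- The perimeter of `E`: the `(n-1)`-dimensional Hausdorff measure of the essential
boundary of `E`. -/
def perimeter {n : ℕ} (E : Set (EuclideanSpace ℝ (Fin n))) : ℝ≥0∞ :=
  μH[(n : ℝ) - 1] (essBoundary E)

/-- The Riesz energy `V_α(E) = ∫_{E×E} |x-y|^(α-n) dx dy`. -/
def rieszEnergy {n : ℕ} (α : ℝ) (E : Set (EuclideanSpace ℝ (Fin n))) : ℝ≥0∞ :=
  ∫⁻ x in E, ∫⁻ y in E, ENNReal.ofReal (‖x - y‖ ^ (α - (n : ℝ)))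

/-- The potential energy `U_{β,A}(E) = A ∫_E |x|^β dx`. -/
def potEnergy {n : ℕ} (β A : ℝ) (E : Set (EuclideanSpace ℝ (Fin n))) : ℝ≥0∞ :=
  ∫⁻ x in E, ENNReal.ofReal (A * ‖x‖ ^ β)

/-- The total energy `E_{α,β,A} = P + V_α + U_{β,A}`. -/
def totalEnergy {n : ℕ} (α β A : ℝ) (E : Set (EuclideanSpace ℝ (Fin n))) : ℝ≥0∞ :=
  perimeter E + rieszEnergy α E + potEnergy β A E

/-- `E` is a minimizer of `E_{α,β,A}` at mass `m`. -/
def IsMinimizer {n : ℕ} (α β A m : ℝ) (E : Set (EuclideanSpace ℝ (Fin n))) : Prop :=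
  MeasurableSet E ∧ volume E = ENNReal.ofReal m ∧
    ∀ F : Set (EuclideanSpace ℝ (Fin n)), MeasurableSet F → volume F = ENNReal.ofReal m →
      totalEnergy α β A E ≤ totalEnergy α β A F

/-- The unit ball of `ℝⁿ` centered at the origin. -/
def unitBall (n : ℕ) : Set (EuclideanSpace ℝ (Fin n)) := Metric.ball 0 1

/-- The set of points of Lebesgue density `1` of `F`. -/
def densityOnePoints {n : ℕ} (F : Set (EuclideanSpace ℝ (Fin n))) :
    Set (EuclideanSpace ℝ (Fin n)) :=
  {x | HasDensity F x 1}

/-!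
If the claim failed, then for every `r ∈ (r₀ - ε, r₀)` the slice `F¹ ∩ ∂B_r` would carry more than
half of the perimeter of `F ∩ B_r`. For almost every `r` its area is at most the derivative of
`m r = |F ∩ B_r|`, so the isoperimetric inequality for `F ∩ B_r` reads
`n |B|^(1/n) m^(1-1/n) < 2 m'`. Hence `m^(1/n)` grows faster than `|B|^(1/n) / 2`, which forces
`m r₀ > |B| (ε/2)ⁿ`.

The isoperimetric inequality for a set `F` whose perimeter is the measure of its essential boundary
comes from the Brunn–Minkowski inequality. On almost every line parallel to a given direction, a
point of density `1` and a point of density `0` are separated by a point of `∂*F`. Sweeping along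
`v` therefore bounds `|F ∩ B_κ(x + v)| - |F ∩ B_κ(x)|` by `‖v‖` times the measure of `∂*F` near
`B_κ(x)`. Brunn–Minkowski, applied to the superlevel sets of `x ↦ |F ∩ B_κ(x)|`, turns this into the
isoperimetric inequality for each superlevel set, and these sets exhaust `F` as `κ` tends to `0`.
-/

local notation "E[" n "]" => EuclideanSpace ℝ (Fin n)

/-! ### The Brunn–Minkowski inequality -/

lemma volume_pos_ofReal_lt (c : ℝ≥0∞) : volume {t : ℝ | 0 < t ∧ ENNReal.ofReal t < c} = c := by
  rcases eq_or_ne c ⊤ with rfl | hc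
  · have : {t : ℝ | 0 < t ∧ ENNReal.ofReal t < ⊤} = Set.Ioi 0 := by ext t; simp
    rw [this, Real.volume_Ioi]
  · have : {t : ℝ | 0 < t ∧ ENNReal.ofReal t < c} = Set.Ioo 0 c.toReal := by
      ext t
      exact and_congr_right fun h0 => ENNReal.ofReal_lt_iff_lt_toReal h0.le hc
    rw [this, Real.volume_Ioo, sub_zero, ENNReal.ofReal_toReal hc]

lemma lintegral_eq_lintegral_meas_ofReal_lt {α : Type*} [MeasurableSpace α] (μ : Measure α)
    [SFinite μ] {f : α → ℝ≥0∞} (hf : Measurable f) :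
    ∫⁻ x, f x ∂μ = ∫⁻ t in Set.Ioi (0 : ℝ), μ {x | ENNReal.ofReal t < f x} := by
  have hS : MeasurableSet {p : ℝ × α | ENNReal.ofReal p.1 < f p.2} :=
    measurableSet_lt (by fun_prop) (by fun_prop)
  have hlevel : ∀ t : ℝ, μ {x | ENNReal.ofReal t < f x}
      = ∫⁻ x, {p : ℝ × α | ENNReal.ofReal p.1 < f p.2}.indicator 1 (t, x) ∂μ := fun t => by
    rw [← lintegral_indicator_one (measurableSet_lt (by fun_prop) hf)]
    rfl
  simp_rw [hlevel]
  rw [lintegral_lintegral_swap (f := fun t x => {p : ℝ × α | ENNReal.ofReal p.1 < f p.2}.indicator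
    1 (t, x)) (measurable_one.indicator hS).aemeasurable]
  refine lintegral_congr fun x => ?_
  change f x = ∫⁻ t in Set.Ioi (0 : ℝ), {t : ℝ | ENNReal.ofReal t < f x}.indicator 1 t
  have hm : MeasurableSet {t : ℝ | ENNReal.ofReal t < f x} :=
    measurableSet_lt (by fun_prop) (by fun_prop)
  rw [lintegral_indicator_one hm, Measure.restrict_apply hm, Set.inter_comm]
  exact (volume_pos_ofReal_lt (f x)).symm

lemma antitone_meas_ofReal_lt {α : Type*} [MeasurableSpace α] (μ : Measure α) (f : α → ℝ≥0∞) :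
    Antitone fun t : ℝ => μ {x | ENNReal.ofReal t < f x} :=
  fun _ _ hab => measure_mono fun _ hx => (ENNReal.ofReal_le_ofReal hab).trans_lt hx

lemma volume_add_volume_le_of_isCompact {K L C : Set ℝ} (hK : IsCompact K) (hL : IsCompact L)
    (hKn : K.Nonempty) (hLn : L.Nonempty) (h : ∀ x ∈ K, ∀ y ∈ L, x + y ∈ C) :
    volume K + volume L ≤ volume C := by
  obtain ⟨a, ha, haK⟩ := hK.exists_isGreatest hKn
  obtain ⟨b, hb, hbL⟩ := hL.exists_isLeast hLn
  have hLm : MeasurableSet ((a + ·) '' L) := (hL.image (by fun_prop)).measurableSet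
  -- The translates `K + min L` and `max K + L` only meet in `max K + min L`.
  have hinter : (· + b) '' K ∩ (a + ·) '' L ⊆ {a + b} := by
    rintro z ⟨⟨x, hx, rfl⟩, ⟨y, hy, hxy : a + y = x + b⟩⟩
    have hxa := haK hx
    have hby := hbL hy
    change x + b = a + b
    linarith
  have hnull : volume ((· + b) '' K ∩ (a + ·) '' L) = 0 := measure_mono_null hinter (by simp)
  calc volume K + volume L = volume ((· + b) '' K) + volume ((a + ·) '' L) := by
        rw [Set.image_add_right, measure_preimage_add_right, Set.image_add_left,
          measure_preimage_add]
    _ = volume ((· + b) '' K ∪ (a + ·) '' L) := by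
        rw [← measure_union_add_inter _ hLm, hnull, add_zero]
    _ ≤ volume C := by
        refine measure_mono ?_
        rintro z (⟨x, hx, rfl⟩ | ⟨y, hy, rfl⟩)
        exacts [h x hx b hb, h a ha y hy]

lemma volume_add_volume_le {A B C : Set ℝ} (hA : MeasurableSet A) (hB : MeasurableSet B)
    (hAn : A.Nonempty) (hBn : B.Nonempty) (h : ∀ x ∈ A, ∀ y ∈ B, x + y ∈ C) :
    volume A + volume B ≤ volume C := by
  obtain ⟨a, ha⟩ := hAn
  obtain ⟨b, hb⟩ := hBn
  rw [hA.measure_eq_iSup_isCompact, hB.measure_eq_iSup_isCompact]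
  simp_rw [iSup_and']
  refine ENNReal.biSup_add_biSup_le' (p := fun K : Set ℝ => K ⊆ A ∧ IsCompact K)
    (q := fun K : Set ℝ => K ⊆ B ∧ IsCompact K) ⟨∅, by simp⟩ ⟨∅, by simp⟩ ?_
  rintro K ⟨hKA, hK⟩ L ⟨hLB, hL⟩
  have hKA' : insert a K ⊆ A := Set.insert_subset ha hKA
  have hLB' : insert b L ⊆ B := Set.insert_subset hb hLB
  calc volume K + volume L ≤ volume (insert a K) + volume (insert b L) := by
        gcongr <;> exact Set.subset_insert _ _
    _ ≤ volume C := volume_add_volume_le_of_isCompact (hK.insert a) (hL.insert b)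
        (Set.insert_nonempty _ _) (Set.insert_nonempty _ _)
        fun x hx y hy => h x (hKA' hx) y (hLB' hy)

section PrekopaLeindler

variable {s l : ℝ}

lemma rpow_mul_rpow_le_add (hs : 0 < s) (hl : 0 < l) (hsl : s + l = 1) (a b : ℝ≥0∞) :
    a ^ s * b ^ l ≤ ENNReal.ofReal s * a + ENNReal.ofReal l * b := by
  rcases eq_or_ne a ⊤ with rfl | ha
  · rw [ENNReal.mul_top (by simpa using hs), top_add]; exact le_top
  rcases eq_or_ne b ⊤ with rfl | hb
  · rw [ENNReal.mul_top (by simpa using hl), add_top]; exact le_top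
  lift a to NNReal using ha
  lift b to NNReal using hb
  have h := NNReal.geom_mean_le_arith_mean2_weighted s.toNNReal l.toNNReal a b
    (by rw [← Real.toNNReal_add hs.le hl.le, hsl, Real.toNNReal_one])
  rw [Real.coe_toNNReal _ hs.le, Real.coe_toNNReal _ hl.le] at h
  rw [← ENNReal.coe_rpow_of_nonneg _ hs.le, ← ENNReal.coe_rpow_of_nonneg _ hl.le]
  unfold ENNReal.ofReal
  exact_mod_cast h

lemma rpow_mul_rpow_eq_self (hs : 0 < s) (hl : 0 < l) (hsl : s + l = 1) (a : ℝ≥0∞) :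
    a ^ s * a ^ l = a := by
  rw [← ENNReal.rpow_add_of_nonneg _ _ hs.le hl.le, hsl, ENNReal.rpow_one]

open scoped Pointwise in
lemma volume_superlevel_add_le (hs : 0 < s) (hl : 0 < l) (hsl : s + l = 1)
    {f g h : ℝ → ℝ≥0∞} (hf : Measurable f) (hg : Measurable g)
    (H : ∀ x y, f x ^ s * g y ^ l ≤ h (s * x + l * y)) {t : ℝ≥0∞}
    (hft : ∃ x, t < f x) (hgt : ∃ x, t < g x) :
    ENNReal.ofReal s * volume {x | t < f x} + ENNReal.ofReal l * volume {x | t < g x}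
      ≤ volume {x | t < h x} := by
  have hsmul : ∀ {r : ℝ}, 0 < r → ∀ A : Set ℝ,
      ENNReal.ofReal r * volume A = volume (r • A) := fun hr A => by
    simp [Measure.addHaar_smul, abs_of_pos hr]
  rw [hsmul hs, hsmul hl]
  refine volume_add_volume_le ((measurableSet_lt measurable_const hf).const_smul₀ _)
    ((measurableSet_lt measurable_const hg).const_smul₀ _)
    (Set.Nonempty.smul_set hft) (Set.Nonempty.smul_set hgt) ?_
  rintro _ ⟨x, hx : t < f x, rfl⟩ _ ⟨y, hy : t < g y, rfl⟩
  calc t = t ^ s * t ^ l := (rpow_mul_rpow_eq_self hs hl hsl t).symm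
    _ < f x ^ s * g y ^ l :=
        ENNReal.mul_lt_mul (ENNReal.rpow_lt_rpow hx hs) (ENNReal.rpow_lt_rpow hy hl)
    _ ≤ h (s * x + l * y) := H x y

lemma lintegral_add_lintegral_le_of_iSup_eq_one (hs : 0 < s) (hl : 0 < l) (hsl : s + l = 1)
    {f g h : ℝ → ℝ≥0∞} (hf : Measurable f) (hg : Measurable g) (hh : Measurable h)
    (hf1 : ⨆ x, f x = 1) (hg1 : ⨆ x, g x = 1)
    (H : ∀ x y, f x ^ s * g y ^ l ≤ h (s * x + l * y)) :
    ENNReal.ofReal s * (∫⁻ x, f x) + ENNReal.ofReal l * (∫⁻ x, g x) ≤ ∫⁻ x, h x := by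
  have hmeas : ∀ f : ℝ → ℝ≥0∞, Measurable fun t : ℝ => volume {x | ENNReal.ofReal t < f x} :=
    fun f => (antitone_meas_ofReal_lt volume f).measurable
  rw [lintegral_eq_lintegral_meas_ofReal_lt volume hf,
    lintegral_eq_lintegral_meas_ofReal_lt volume hg,
    lintegral_eq_lintegral_meas_ofReal_lt volume hh,
    ← lintegral_const_mul _ (hmeas f), ← lintegral_const_mul _ (hmeas g),
    ← lintegral_add_left ((hmeas f).const_mul _)]
  refine lintegral_mono fun t => ?_
  rcases lt_or_ge (ENNReal.ofReal t) 1 with ht | ht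
  · exact volume_superlevel_add_le hs hl hsl hf hg H
      (lt_iSup_iff.1 (hf1 ▸ ht)) (lt_iSup_iff.1 (hg1 ▸ ht))
  · have hempty : ∀ {f : ℝ → ℝ≥0∞}, ⨆ x, f x = 1 → {x | ENNReal.ofReal t < f x} = ∅ :=
      fun h1 => Set.eq_empty_of_forall_notMem fun x =>
        (((le_iSup _ x).trans h1.le).trans ht).not_gt
    simp [hempty hf1, hempty hg1]

lemma prekopaLeindler_real_of_bdd (hs : 0 < s) (hl : 0 < l) (hsl : s + l = 1)
    {f g h : ℝ → ℝ≥0∞} (hf : Measurable f) (hg : Measurable g) (hh : Measurable h)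
    (hfT : ⨆ x, f x ≠ ⊤) (hgT : ⨆ x, g x ≠ ⊤)
    (H : ∀ x y, f x ^ s * g y ^ l ≤ h (s * x + l * y)) :
    (∫⁻ x, f x) ^ s * (∫⁻ x, g x) ^ l ≤ ∫⁻ x, h x := by
  set a := ⨆ x, f x with ha
  set b := ⨆ x, g x with hb
  rcases eq_or_ne a 0 with ha0 | ha0
  · simp [ENNReal.iSup_eq_zero.1 (ha.symm.trans ha0), hs]
  rcases eq_or_ne b 0 with hb0 | hb0
  · simp [ENNReal.iSup_eq_zero.1 (hb.symm.trans hb0), hl]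
  have hsum := lintegral_add_lintegral_le_of_iSup_eq_one hs hl hsl
    (f := fun x => a⁻¹ * f x) (g := fun x => b⁻¹ * g x)
    (h := fun x => a⁻¹ ^ s * b⁻¹ ^ l * h x)
    (hf.const_mul _) (hg.const_mul _) (hh.const_mul _)
    (by rw [← ENNReal.mul_iSup, ← ha, ENNReal.inv_mul_cancel ha0 hfT])
    (by rw [← ENNReal.mul_iSup, ← hb, ENNReal.inv_mul_cancel hb0 hgT]) fun x y => by
      rw [ENNReal.mul_rpow_of_nonneg _ _ hs.le, ENNReal.mul_rpow_of_nonneg _ _ hl.le,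
        mul_mul_mul_comm]
      gcongr
      exact H x y
  have hprod := (rpow_mul_rpow_le_add hs hl hsl _ _).trans hsum
  rw [lintegral_const_mul _ hf, lintegral_const_mul _ hg, lintegral_const_mul _ hh,
    ENNReal.mul_rpow_of_nonneg _ _ hs.le, ENNReal.mul_rpow_of_nonneg _ _ hl.le,
    mul_mul_mul_comm] at hprod
  have hc0 : a⁻¹ ^ s * b⁻¹ ^ l ≠ 0 := by simp [hs.not_gt, hl.not_gt, hfT, hgT]
  have hcT : a⁻¹ ^ s * b⁻¹ ^ l ≠ ⊤ :=
    ENNReal.mul_ne_top (ENNReal.rpow_ne_top_of_nonneg hs.le (ENNReal.inv_ne_top.2 ha0))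
      (ENNReal.rpow_ne_top_of_nonneg hl.le (ENNReal.inv_ne_top.2 hb0))
  exact (ENNReal.mul_le_mul_iff_right hc0 hcT).1 hprod

lemma lintegral_eq_iSup_lintegral_min_natCast {α : Type*} [MeasurableSpace α] {μ : Measure α}
    {f : α → ℝ≥0∞} (hf : Measurable f) : ∫⁻ x, f x ∂μ = ⨆ n : ℕ, ∫⁻ x, min (f x) n ∂μ := by
  rw [← lintegral_iSup (fun n => hf.min measurable_const) fun a b hab x => by dsimp only; gcongr]
  refine lintegral_congr fun x => ?_
  change f x = ⨆ n : ℕ, f x ⊓ (n : ℝ≥0∞)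
  rw [← inf_iSup_eq, ENNReal.iSup_natCast, inf_top_eq]

lemma prekopaLeindler_real (hs : 0 < s) (hl : 0 < l) (hsl : s + l = 1)
    {f g h : ℝ → ℝ≥0∞} (hf : Measurable f) (hg : Measurable g) (hh : Measurable h)
    (H : ∀ x y, f x ^ s * g y ^ l ≤ h (s * x + l * y)) :
    (∫⁻ x, f x) ^ s * (∫⁻ x, g x) ^ l ≤ ∫⁻ x, h x := by
  have hiSup : ∀ (u : ℕ → ℝ≥0∞) {r : ℝ}, 0 < r → (⨆ n, u n) ^ r = ⨆ n, u n ^ r :=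
    fun u r hr => (ENNReal.orderIsoRpow r hr).map_iSup u
  rw [lintegral_eq_iSup_lintegral_min_natCast hf, lintegral_eq_iSup_lintegral_min_natCast hg,
    hiSup _ hs, hiSup _ hl, ENNReal.iSup_mul]
  refine iSup_le fun i => ?_
  rw [ENNReal.mul_iSup]
  refine iSup_le fun j => ?_
  have hbdd : ∀ (f : ℝ → ℝ≥0∞) (i : ℕ), ⨆ x, min (f x) (i : ℝ≥0∞) ≠ ⊤ := fun f i =>
    ((iSup_le fun x => min_le_right _ _).trans_lt (ENNReal.natCast_lt_top i)).ne
  refine prekopaLeindler_real_of_bdd hs hl hsl (hf.min measurable_const)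
    (hg.min measurable_const) hh (hbdd f i) (hbdd g j) fun x y => (H x y).trans' ?_
  gcongr
  exacts [min_le_left _ _, min_le_left _ _]

lemma measurable_finCons (n : ℕ) :
    Measurable fun p : ℝ × (Fin n → ℝ) => (Fin.cons p.1 p.2 : Fin (n + 1) → ℝ) := by
  refine measurable_pi_iff.2 (Fin.cases ?_ fun i => ?_)
  · simpa only [Fin.cons_zero] using measurable_fst
  · simp only [Fin.cons_succ]; fun_prop

lemma lintegral_fin_succ {n : ℕ} {f : (Fin (n + 1) → ℝ) → ℝ≥0∞} (hf : Measurable f) :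
    ∫⁻ x, f x = ∫⁻ t : ℝ, ∫⁻ y : Fin n → ℝ, f (Fin.cons t y) := by
  let e := MeasurableEquiv.piFinSuccAbove (fun _ : Fin (n + 1) => ℝ) 0
  have he : ∀ p, e.symm p = Fin.cons p.1 p.2 := fun p => by
    simp [e, MeasurableEquiv.piFinSuccAbove, Fin.insertNthEquiv, Fin.insertNth_zero']
  rw [← ((volume_preserving_piFinSuccAbove (fun _ : Fin (n + 1) => ℝ) 0).symm e).lintegral_comp hf,
    Measure.volume_eq_prod,
    lintegral_prod (fun p => f (e.symm p)) (hf.comp e.symm.measurable).aemeasurable]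
  simp_rw [he]

lemma prekopaLeindler_pi (hs : 0 < s) (hl : 0 < l) (hsl : s + l = 1)
    {n : ℕ} {f g h : (Fin n → ℝ) → ℝ≥0∞} (hf : Measurable f) (hg : Measurable g)
    (hh : Measurable h) (H : ∀ x y, f x ^ s * g y ^ l ≤ h (s • x + l • y)) :
    (∫⁻ x, f x) ^ s * (∫⁻ x, g x) ^ l ≤ ∫⁻ x, h x := by
  induction n with
  | zero =>
    rw [Measure.volume_pi_eq_dirac 0]
    simp only [lintegral_dirac]
    simpa using H 0 0
  | succ n ih =>
    have hcons : ∀ {f : (Fin (n + 1) → ℝ) → ℝ≥0∞}, Measurable f →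
        Measurable fun p : ℝ × (Fin n → ℝ) => f (Fin.cons p.1 p.2) :=
      fun hf => hf.comp (measurable_finCons n)
    rw [lintegral_fin_succ hf, lintegral_fin_succ hg, lintegral_fin_succ hh]
    refine prekopaLeindler_real hs hl hsl (hcons hf).lintegral_prod_right'
      (hcons hg).lintegral_prod_right' (hcons hh).lintegral_prod_right' fun t t' => ?_
    refine ih ((hcons hf).comp measurable_prodMk_left) ((hcons hg).comp measurable_prodMk_left)
      ((hcons hh).comp measurable_prodMk_left) fun x y => ?_
    have hcomb : s • (Fin.cons t x : Fin (n + 1) → ℝ) + l • (Fin.cons t' y : Fin (n + 1) → ℝ)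
        = Fin.cons (s * t + l * t') (s • x + l • y) := by
      ext i
      refine Fin.cases ?_ (fun i => ?_) i <;> simp
    exact hcomb ▸ H (Fin.cons t x) (Fin.cons t' y)

end PrekopaLeindler

lemma volume_rpow_mul_volume_rpow_le {s l : ℝ} (hs : 0 < s) (hl : 0 < l) (hsl : s + l = 1) {n : ℕ}
    {A B C : Set E[n]} (hA : MeasurableSet A) (hB : MeasurableSet B) (hC : MeasurableSet C)
    (H : ∀ x ∈ A, ∀ y ∈ B, s • x + l • y ∈ C) :
    volume A ^ s * volume B ^ l ≤ volume C := by
  have hmp := PiLp.volume_preserving_toLp (Fin n)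
  have hvol : ∀ {A : Set E[n]}, MeasurableSet A →
      volume A = ∫⁻ x : Fin n → ℝ, A.indicator 1 (WithLp.toLp 2 x) := fun hA => by
    rw [hmp.lintegral_comp (measurable_one.indicator hA), lintegral_indicator_one hA]
  have hmeas : ∀ {A : Set E[n]}, MeasurableSet A →
      Measurable fun x : Fin n → ℝ => A.indicator (1 : E[n] → ℝ≥0∞) (WithLp.toLp 2 x) :=
    fun hA => (measurable_one.indicator hA).comp hmp.measurable
  rw [hvol hA, hvol hB, hvol hC]
  refine prekopaLeindler_pi hs hl hsl (hmeas hA) (hmeas hB) (hmeas hC) fun x y => ?_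
  by_cases hx : WithLp.toLp 2 x ∈ A
  · by_cases hy : WithLp.toLp 2 y ∈ B
    · have hxy := H _ hx _ hy
      simp [hx, hy, hxy]
    · simp [hy, hl]
  · simp [hx, hs]

lemma exists_pos_eq_ofReal_pow {n : ℕ} (hn : n ≠ 0) {v : ℝ≥0∞} (h0 : v ≠ 0) (hT : v ≠ ⊤) :
    ∃ a : ℝ, 0 < a ∧ v = ENNReal.ofReal (a ^ n) := by
  have hv := ENNReal.toReal_pos h0 hT
  refine ⟨v.toReal ^ (n⁻¹ : ℝ), Real.rpow_pos_of_pos hv _, ?_⟩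
  rw [Real.rpow_inv_natCast_pow hv.le hn, ENNReal.ofReal_toReal hT]

lemma ofReal_pow_rpow_inv {n : ℕ} (hn : n ≠ 0) {a : ℝ} (ha : 0 ≤ a) :
    ENNReal.ofReal (a ^ n) ^ (n⁻¹ : ℝ) = ENNReal.ofReal a := by
  rw [ENNReal.ofReal_pow ha, ENNReal.pow_rpow_inv_natCast hn]

lemma volume_eq_top_of_add_subset {n : ℕ} {A C : Set E[n]} (hA : volume A = ⊤) {y : E[n]}
    (H : ∀ x ∈ A, x + y ∈ C) : volume C = ⊤ := by
  refine top_le_iff.1 (hA.symm.le.trans ?_)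
  calc volume A ≤ volume ((· + y) ⁻¹' C) := measure_mono H
    _ = volume C := measure_preimage_add_right _ _ _

open scoped Pointwise in
lemma ofReal_add_pow_le_volume {n : ℕ} {A B C : Set E[n]} (hA : MeasurableSet A)
    (hB : MeasurableSet B) (hC : MeasurableSet C) {a b : ℝ} (ha : 0 < a) (hb : 0 < b)
    (hAa : volume A = ENNReal.ofReal (a ^ n)) (hBb : volume B = ENNReal.ofReal (b ^ n))
    (H : ∀ x ∈ A, ∀ y ∈ B, x + y ∈ C) : ENNReal.ofReal ((a + b) ^ n) ≤ volume C := by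
  set s := a / (a + b) with hs
  set l := b / (a + b) with hl
  have hs0 : 0 < s := by positivity
  have hl0 : 0 < l := by positivity
  have hsl : s + l = 1 := by rw [hs, hl]; field_simp
  have hscale : ∀ {A : Set E[n]} {a s : ℝ}, 0 < a → 0 < s → volume A = ENNReal.ofReal (a ^ n) →
      volume (s⁻¹ • A) = ENNReal.ofReal ((s⁻¹ * a) ^ n) := fun _ hs hA => by
    rw [Measure.addHaar_smul, finrank_euclideanSpace_fin, hA, ← ENNReal.ofReal_mul (by positivity),
      abs_of_pos (by positivity), mul_pow]
  have hmul := volume_rpow_mul_volume_rpow_le hs0 hl0 hsl (hA.const_smul₀ s⁻¹)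
    (hB.const_smul₀ l⁻¹) hC (by
      rintro _ ⟨x, hx, rfl⟩ _ ⟨y, hy, rfl⟩
      simpa [smul_smul, hs0.ne', hl0.ne'] using H x hx y hy)
  rwa [hscale ha hs0 hAa, hscale hb hl0 hBb, show s⁻¹ * a = a + b by rw [hs]; field_simp,
    show l⁻¹ * b = a + b by rw [hl]; field_simp, rpow_mul_rpow_eq_self hs0 hl0 hsl] at hmul

lemma brunnMinkowski {n : ℕ} (hn : n ≠ 0) {A B C : Set E[n]} (hA : MeasurableSet A)
    (hB : MeasurableSet B) (hC : MeasurableSet C) (hA0 : volume A ≠ 0) (hB0 : volume B ≠ 0)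
    (H : ∀ x ∈ A, ∀ y ∈ B, x + y ∈ C) :
    volume A ^ (n⁻¹ : ℝ) + volume B ^ (n⁻¹ : ℝ) ≤ volume C ^ (n⁻¹ : ℝ) := by
  have hn' : (0 : ℝ) < (n : ℝ)⁻¹ := by positivity
  rcases eq_or_ne (volume A) ⊤ with hAT | hAT
  · obtain ⟨y, hy⟩ := nonempty_of_measure_ne_zero hB0
    rw [volume_eq_top_of_add_subset (C := C) hAT fun x hx => H x hx y hy,
      ENNReal.top_rpow_of_pos hn']
    exact le_top
  rcases eq_or_ne (volume B) ⊤ with hBT | hBT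
  · obtain ⟨x, hx⟩ := nonempty_of_measure_ne_zero hA0
    rw [volume_eq_top_of_add_subset (C := C) hBT (y := x)
      fun y hy => add_comm x y ▸ H x hx y hy, ENNReal.top_rpow_of_pos hn']
    exact le_top
  obtain ⟨a, ha, hAa⟩ := exists_pos_eq_ofReal_pow hn hA0 hAT
  obtain ⟨b, hb, hBb⟩ := exists_pos_eq_ofReal_pow hn hB0 hBT
  rw [hAa, hBb, ofReal_pow_rpow_inv hn ha.le, ofReal_pow_rpow_inv hn hb.le,
    ← ENNReal.ofReal_add ha.le hb.le, ← ofReal_pow_rpow_inv hn (by positivity)]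
  exact ENNReal.rpow_le_rpow (ofReal_add_pow_le_volume hA hB hC ha hb hAa hBb H) hn'.le

/-! ### The isoperimetric profile -/

/-- The isoperimetric profile of `ℝⁿ`: the perimeter of a ball of volume `v`. -/
def isoperimetricProfile (n : ℕ) (v : ℝ≥0∞) : ℝ≥0∞ :=
  n * volume (ball (0 : E[n]) 1) ^ (n⁻¹ : ℝ) * v ^ (1 - (n : ℝ)⁻¹)

lemma one_sub_natCast_inv_nonneg (n : ℕ) : (0 : ℝ) ≤ 1 - (n : ℝ)⁻¹ := by
  rw [sub_nonneg]; exact Nat.cast_inv_le_one n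

lemma monotone_isoperimetricProfile (n : ℕ) : Monotone (isoperimetricProfile n) := fun _ _ h => by
  unfold isoperimetricProfile
  gcongr
  exact one_sub_natCast_inv_nonneg n

lemma volume_ball_one_rpow_ne_top (n : ℕ) : volume (ball (0 : E[n]) 1) ^ (n⁻¹ : ℝ) ≠ ⊤ :=
  ENNReal.rpow_ne_top_of_nonneg (by positivity) measure_ball_lt_top.ne

lemma continuous_isoperimetricProfile (n : ℕ) : Continuous (isoperimetricProfile n) :=
  (ENNReal.continuous_const_mul
    (ENNReal.mul_ne_top (ENNReal.natCast_ne_top n) (volume_ball_one_rpow_ne_top n))).comp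
    ENNReal.continuous_rpow_const

lemma pow_add_mul_pow_mul_le_add_pow (x y : ℝ≥0∞) (k : ℕ) :
    x ^ (k + 1) + (k + 1) * x ^ k * y ≤ (x + y) ^ (k + 1) := by
  induction k with
  | zero => simp
  | succ k ih =>
    calc x ^ (k + 2) + ((k + 1 : ℕ) + 1) * x ^ (k + 1) * y
        ≤ x ^ (k + 2) + ((k + 1 : ℕ) + 1) * x ^ (k + 1) * y + (k + 1) * x ^ k * y ^ 2 :=
          le_self_add
      _ = (x ^ (k + 1) + (k + 1) * x ^ k * y) * (x + y) := by push_cast; ring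
      _ ≤ (x + y) ^ (k + 2) := by rw [pow_succ (x + y) (k + 1)]; gcongr

lemma volume_add_isoperimetricProfile_le {n : ℕ} (hn : n ≠ 0) {A D : Set E[n]}
    (hA : MeasurableSet A) (hD : MeasurableSet D) (hA0 : volume A ≠ 0) {δ : ℝ} (hδ : 0 < δ)
    (H : ∀ x ∈ A, ∀ y, ‖y‖ < δ → x + y ∈ D) :
    volume A + ENNReal.ofReal δ * isoperimetricProfile n (volume A) ≤ volume D := by
  obtain ⟨k, rfl⟩ := Nat.exists_eq_succ_of_ne_zero hn
  set p : ℝ := ((k.succ : ℕ) : ℝ)⁻¹ with hp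
  have hpow : ∀ v : ℝ≥0∞, (v ^ p) ^ (k + 1) = v := fun v => ENNReal.rpow_inv_natCast_pow hn v
  have hpow' : (volume A ^ p) ^ k = volume A ^ (1 - p) := by
    rw [← ENNReal.rpow_mul_natCast, hp]
    congr 1
    push_cast
    field_simp
    ring
  have hball : volume (ball (0 : E[k.succ]) δ) ^ p
      = ENNReal.ofReal δ * volume (ball (0 : E[k.succ]) 1) ^ p := by
    rw [Measure.addHaar_ball_of_pos _ _ hδ, finrank_euclideanSpace_fin,
      ENNReal.mul_rpow_of_nonneg _ _ (by positivity), ofReal_pow_rpow_inv hn hδ.le]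
  have hBM := brunnMinkowski hn hA measurableSet_ball hD hA0
    (measure_ball_pos volume (0 : E[k.succ]) hδ).ne'
    fun x hx y hy => H x hx y (mem_ball_zero_iff.1 hy)
  calc volume A + ENNReal.ofReal δ * isoperimetricProfile k.succ (volume A)
      = (volume A ^ p) ^ (k + 1) + (k + 1) * (volume A ^ p) ^ k
          * volume (ball (0 : E[k.succ]) δ) ^ p := by
        rw [hpow, hpow', hball, isoperimetricProfile, Nat.cast_succ]
        ring
    _ ≤ (volume A ^ p + volume (ball (0 : E[k.succ]) δ) ^ p) ^ (k + 1) :=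
        pow_add_mul_pow_mul_le_add_pow _ _ _
    _ ≤ (volume D ^ p) ^ (k + 1) := by gcongr
    _ = volume D := hpow _

lemma volume_superlevel_add_isoperimetricProfile_le {n : ℕ} (hn : n ≠ 0) {f F : E[n] → ℝ≥0∞}
    (hf : Measurable f) (hF : Measurable F) {δ : ℝ} (hδ : 0 < δ)
    (H : ∀ x y, ‖y‖ < δ → f x ≤ F (x + y)) {σ t : ℝ≥0∞} (ht : t < σ)
    (hσ : volume {x | σ ≤ f x} ≠ 0) :
    volume {x | t < f x} + ENNReal.ofReal δ * isoperimetricProfile n (volume {x | σ ≤ f x})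
      ≤ volume {x | t < F x} := by
  have hsub : {x | σ ≤ f x} ⊆ {x | t < f x} := fun x hx => ht.trans_le hx
  refine le_trans ?_ (volume_add_isoperimetricProfile_le hn (measurableSet_lt measurable_const hf)
    (measurableSet_lt measurable_const hF) (fun h0 => hσ (measure_mono_null hsub h0)) hδ
    fun x (hx : t < f x) y hy => hx.trans_le (H x y hy))
  gcongr
  exact monotone_isoperimetricProfile n (measure_mono hsub)

lemma mul_isoperimetricProfile_le_lintegral {n : ℕ} (hn : n ≠ 0) {f h : E[n] → ℝ≥0∞}
    (hf : Measurable f) (hh : Measurable h) (hfT : ∫⁻ x, f x ≠ ⊤) {δ : ℝ} (hδ : 0 < δ)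
    (H : ∀ x y, ‖y‖ < δ → f (x + y) ≤ f x + ENNReal.ofReal δ * h x) {σ : ℝ≥0∞}
    (hσ : volume {x | σ ≤ f x} ≠ 0) :
    σ * isoperimetricProfile n (volume {x | σ ≤ f x}) ≤ ∫⁻ x, h x := by
  set P := isoperimetricProfile n (volume {x | σ ≤ f x})
  have hF : Measurable fun x => f x + ENNReal.ofReal δ * h x := hf.add (hh.const_mul _)
  have hlevel : ∀ t : ℝ, volume {x | ENNReal.ofReal t < f x}
      + {t : ℝ | ENNReal.ofReal t < σ}.indicator (fun _ => ENNReal.ofReal δ * P) t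
        ≤ volume {x | ENNReal.ofReal t < f x + ENNReal.ofReal δ * h x} := fun t => by
    rcases lt_or_ge (ENNReal.ofReal t) σ with ht | ht
    · rw [Set.indicator_of_mem (by exact ht)]
      exact volume_superlevel_add_isoperimetricProfile_le hn hf hF hδ
        (fun x y hy => by simpa using H (x + y) (-y) (by simpa using hy)) ht hσ
    · rw [Set.indicator_of_notMem (by exact ht.not_gt), add_zero]
      gcongr
      exact le_self_add
  have hσm : MeasurableSet {t : ℝ | ENNReal.ofReal t < σ} :=
    measurableSet_lt (by fun_prop) measurable_const
  have hσvol : volume ({t : ℝ | ENNReal.ofReal t < σ} ∩ Set.Ioi 0) = σ := by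
    rw [Set.inter_comm]; exact volume_pos_ofReal_lt σ
  have hsum : (∫⁻ x, f x) + ENNReal.ofReal δ * P * σ
      ≤ (∫⁻ x, f x) + ENNReal.ofReal δ * ∫⁻ x, h x := by
    rw [← lintegral_const_mul _ hh, ← lintegral_add_left hf,
      lintegral_eq_lintegral_meas_ofReal_lt volume hF]
    refine le_trans (le_of_eq ?_) (lintegral_mono hlevel)
    rw [lintegral_add_left (antitone_meas_ofReal_lt volume f).measurable,
      lintegral_indicator_const hσm, Measure.restrict_apply hσm, hσvol,
      ← lintegral_eq_lintegral_meas_ofReal_lt volume hf]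
  rw [mul_assoc, mul_comm P] at hsum
  exact (ENNReal.mul_le_mul_iff_right (by simpa using hδ) ENNReal.ofReal_ne_top).1
    ((ENNReal.add_le_add_iff_left hfT).1 hsum)

/-! ### Lebesgue density -/

section Density

variable {n : ℕ} {F : Set E[n]} {x : E[n]}

lemma volume_inter_ball_ne_top (A : Set E[n]) (x : E[n]) (r : ℝ) : volume (A ∩ ball x r) ≠ ⊤ :=
  measure_ne_top_of_subset Set.inter_subset_right measure_ball_lt_top.ne

lemma volume_inter_add_volume_compl_inter (hF : MeasurableSet F) (A : Set E[n]) :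
    volume (F ∩ A) + volume (Fᶜ ∩ A) = volume A := by
  rw [Set.inter_comm F, Set.inter_comm Fᶜ, ← Set.sdiff_eq, measure_inter_add_sdiff _ hF]

lemma HasDensity.compl (hF : MeasurableSet F) {d : ℝ} (h : HasDensity F x d) :
    HasDensity Fᶜ x (1 - d) := by
  refine ((tendsto_const_nhds (x := (1 : ℝ))).sub h).congr' ?_
  filter_upwards [self_mem_nhdsWithin] with r hr
  have hpos : 0 < (volume (ball x r)).toReal :=
    ENNReal.toReal_pos (measure_ball_pos _ _ hr).ne' measure_ball_lt_top.ne
  have hadd := congrArg ENNReal.toReal (volume_inter_add_volume_compl_inter hF (ball x r))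
  rw [ENNReal.toReal_add (volume_inter_ball_ne_top _ _ _) (volume_inter_ball_ne_top _ _ _)] at hadd
  field_simp
  linarith

lemma hasDensity_compl_one (hF : MeasurableSet F) : HasDensity Fᶜ x 1 ↔ HasDensity F x 0 :=
  ⟨fun h => by simpa using h.compl hF.compl, fun h => by simpa using h.compl hF⟩

lemma hasDensity_compl_zero (hF : MeasurableSet F) : HasDensity Fᶜ x 0 ↔ HasDensity F x 1 :=
  ⟨fun h => by simpa using h.compl hF.compl, fun h => by simpa using h.compl hF⟩

lemma HasDensity.not_hasDensity_one (h : HasDensity F x 0) : ¬ HasDensity F x 1 := fun h1 =>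
  zero_ne_one (tendsto_nhds_unique h h1)

lemma hasDensity_preimage (ρ : E[n] ≃ₗᵢ[ℝ] E[n]) (F : Set E[n]) (x : E[n]) (d : ℝ) :
    HasDensity (ρ ⁻¹' F) x d ↔ HasDensity F (ρ x) d := by
  have hball : ∀ r, ball x r = ρ ⁻¹' ball (ρ x) r := fun r => by
    rw [ρ.preimage_ball, ρ.symm_apply_apply]
  have hvol : ∀ A : Set E[n], volume (ρ ⁻¹' A) = volume A := fun A =>
    ρ.measurePreserving.measure_preimage_emb ρ.toHomeomorph.measurableEmbedding A
  unfold HasDensity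
  simp only [hball, ← Set.preimage_inter, hvol]

lemma HasDensity.congr {G : Set E[n]} {d : ℝ} (h : HasDensity F x d) {U : Set E[n]}
    (hU : U ∈ nhds x) (hFG : F ∩ U = G ∩ U) : HasDensity G x d := by
  obtain ⟨R, hR, hRU⟩ := Metric.mem_nhds_iff.1 hU
  refine Tendsto.congr' ?_ h
  filter_upwards [Ioo_mem_nhdsGT hR] with r hr
  have hrU : ball x r ⊆ U := (ball_subset_ball hr.2.le).trans hRU
  rw [← Set.inter_eq_right.2 hrU, ← Set.inter_assoc, ← Set.inter_assoc, hFG]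

lemma HasDensity.exists_volume_inter_ball_le (h : HasDensity F x 0) {η : ℝ≥0∞} (hη : η ≠ 0) :
    ∃ R > 0, ∀ r ∈ Set.Ioo 0 R, volume (F ∩ ball x r) ≤ η * volume (ball x r) := by
  have hlim : Tendsto (fun r => volume (F ∩ ball x r) / volume (ball x r))
      (nhdsWithin 0 (Set.Ioi 0)) (nhds 0) := by
    rw [← ENNReal.ofReal_zero]
    refine (ENNReal.tendsto_ofReal h).congr' ?_
    filter_upwards [self_mem_nhdsWithin] with r hr
    rw [← ENNReal.toReal_div, ENNReal.ofReal_toReal]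
    exact ENNReal.div_ne_top (volume_inter_ball_ne_top _ _ _) (measure_ball_pos _ _ hr).ne'
  obtain ⟨R, hR, hsub⟩ := mem_nhdsGT_iff_exists_Ioo_subset.1
    (hlim.eventually_lt_const (pos_iff_ne_zero.2 hη))
  refine ⟨R, hR, fun r hr => ?_⟩
  exact (ENNReal.div_le_iff (measure_ball_pos _ _ hr.1).ne' measure_ball_lt_top.ne).1 (hsub hr).le

lemma ae_hasDensity_one_of_mem (hF : MeasurableSet F) : ∀ᵐ x, x ∈ F → HasDensity F x 1 := by
  have hLeb := Besicovitch.ae_tendsto_measure_inter_div (volume : Measure E[n]) F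
  rw [ae_restrict_iff' hF] at hLeb
  filter_upwards [hLeb] with x hx hxF
  refine ((ENNReal.tendsto_toReal one_ne_top).comp (hx hxF)).congr' ?_
  filter_upwards [self_mem_nhdsWithin] with r (hr : 0 < r)
  have hae : (closedBall x r : Set E[n]) =ᵐ[volume] ball x r := by
    rw [← ball_union_sphere]
    exact union_ae_eq_left_of_ae_eq_empty
      (ae_eq_empty.2 (Measure.addHaar_sphere_of_ne_zero volume x hr.ne'))
  rw [Function.comp_apply, measure_congr hae, measure_congr ((ae_eq_refl F).inter hae),
    ENNReal.toReal_div]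

lemma ae_mem_densityOnePoints_iff (hF : MeasurableSet F) :
    ∀ᵐ x, (x ∈ densityOnePoints F ↔ x ∈ F) := by
  filter_upwards [ae_hasDensity_one_of_mem hF, ae_hasDensity_one_of_mem hF.compl] with x h1 h2
  refine ⟨fun h => by_contra fun hx => ?_, h1⟩
  exact ((hasDensity_compl_one hF).1 (h2 hx)).not_hasDensity_one h

/-- The points `x` such that the complement of `F` fills at most the fraction `η` of every ball
around `x` of radius less than `R`: the quantitative form of having density `1`. -/
def denseAtScales (F : Set E[n]) (η : ℝ≥0∞) (R : ℝ) : Set E[n] :=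
  {x | ∀ r ∈ Set.Ioo 0 R, volume (Fᶜ ∩ ball x r) ≤ η * volume (ball x r)}

lemma denseAtScales_anti (F : Set E[n]) (η : ℝ≥0∞) : Antitone (denseAtScales F η) :=
  fun _ _ h _ hx r hr => hx r ⟨hr.1, hr.2.trans_le h⟩

lemma isClosed_denseAtScales {η : ℝ≥0∞} (hη : η ≠ ⊤) (R : ℝ) :
    IsClosed (denseAtScales F η R) := by
  refine isClosed_of_closure_subset fun x hx r hr => ?_
  have hbound : ∀ d ∈ Set.Ioo 0 (R - r),
      volume (Fᶜ ∩ ball x r) ≤ η * volume (ball x (r + d)) := fun d hd => by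
    obtain ⟨x', hx', hd'⟩ := Metric.mem_closure_iff.1 hx d hd.1
    calc volume (Fᶜ ∩ ball x r) ≤ volume (Fᶜ ∩ ball x' (r + d)) := by
          gcongr
          exact ball_subset_ball' (by gcongr)
      _ ≤ η * volume (ball x' (r + d)) :=
          hx' (r + d) ⟨add_pos hr.1 hd.1, lt_sub_iff_add_lt'.1 hd.2⟩
      _ = η * volume (ball x (r + d)) := by
          rw [Measure.addHaar_ball_center _ x', Measure.addHaar_ball_center _ x]
  have hlim : Tendsto (fun d => η * (.ofReal ((r + d) ^ Module.finrank ℝ E[n]) *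
      volume (ball (0 : E[n]) 1))) (nhdsWithin 0 (Set.Ioi 0))
      (nhds (η * (.ofReal ((r + 0) ^ Module.finrank ℝ E[n]) * volume (ball (0 : E[n]) 1)))) := by
    refine ENNReal.Tendsto.const_mul (ENNReal.Tendsto.mul_const ?_
      (.inr measure_ball_lt_top.ne)) (.inr hη)
    exact (ENNReal.continuous_ofReal.comp (by fun_prop)).continuousWithinAt
  rw [add_zero, ← Measure.addHaar_ball_of_pos volume x hr.1] at hlim
  refine ge_of_tendsto hlim ?_
  filter_upwards [Ioo_mem_nhdsGT (sub_pos.2 hr.2)] with d hd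
  rw [← Measure.addHaar_ball_of_pos volume x (add_pos hr.1 hd.1)]
  exact hbound d hd

lemma HasDensity.exists_mem_denseAtScales (hF : MeasurableSet F) (h : HasDensity F x 1)
    {η : ℝ≥0∞} (hη : η ≠ 0) : ∃ R > 0, x ∈ denseAtScales F η R :=
  ((hasDensity_compl_zero hF).2 h).exists_volume_inter_ball_le hη

lemma not_hasDensity_zero_of_mem_denseAtScales (hF : MeasurableSet F) {η : ℝ≥0∞}
    (hη : η < 1) {R : ℝ} (hR : 0 < R) (hx : x ∈ denseAtScales F η R) : ¬ HasDensity F x 0 := by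
  intro h0
  obtain ⟨η', hη', hsum⟩ := ENNReal.lt_iff_exists_add_pos_lt.1 hη
  obtain ⟨R', hR', hsmall⟩ := h0.exists_volume_inter_ball_le (ENNReal.coe_ne_zero.2 hη'.ne')
  obtain ⟨r, hr, hrR⟩ := exists_between (lt_min hR hR')
  refine lt_irrefl (volume (ball x r)) ?_
  calc volume (ball x r) = volume (F ∩ ball x r) + volume (Fᶜ ∩ ball x r) :=
        (volume_inter_add_volume_compl_inter hF _).symm
    _ ≤ η' * volume (ball x r) + η * volume (ball x r) :=
        add_le_add (hsmall r ⟨hr, hrR.trans_le (min_le_right _ _)⟩)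
          (hx r ⟨hr, hrR.trans_le (min_le_left _ _)⟩)
    _ = (η + η') * volume (ball x r) := by rw [add_comm, add_mul]
    _ < 1 * volume (ball x r) :=
        ENNReal.mul_lt_mul_left (measure_ball_pos _ _ hr).ne' measure_ball_lt_top.ne hsum
    _ = volume (ball x r) := one_mul _

end Density

/-! ### Lines in a fixed direction -/

section Lines

variable {V : Type*} [NormedAddCommGroup V] [InnerProductSpace ℝ V] {e : V}

lemma inner_smul_add_coe (he : ‖e‖ = 1) (t : ℝ) (y : (ℝ ∙ e)ᗮ) :
    inner ℝ e (t • e + (y : V)) = t := by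
  rw [inner_add_right, real_inner_smul_right, real_inner_self_eq_norm_sq, he,
    Submodule.mem_orthogonal_singleton_iff_inner_right.1 y.2]
  ring

lemma orthogonalProjectionOnto_smul_add_coe (t : ℝ) (y : (ℝ ∙ e)ᗮ) :
    (ℝ ∙ e)ᗮ.orthogonalProjectionOnto (t • e + (y : V)) = y := by
  rw [map_add, Submodule.orthogonalProjectionOnto_mem_subspace_eq_self, add_eq_right]
  exact Submodule.orthogonalProjectionOnto_orthogonal_apply_eq_zero
    (Submodule.smul_mem _ t (Submodule.mem_span_singleton_self e))

lemma norm_sq_smul_add_coe (he : ‖e‖ = 1) (t : ℝ) (y : (ℝ ∙ e)ᗮ) :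
    ‖t • e + (y : V)‖ ^ 2 = t ^ 2 + ‖y‖ ^ 2 := by
  have horth : inner ℝ (t • e) (y : V) = 0 := by
    rw [real_inner_smul_left, (Submodule.mem_orthogonal_singleton_iff_inner_right.1 y.2), mul_zero]
  rw [norm_add_sq_real, horth, norm_smul, he, mul_one, Real.norm_eq_abs, sq_abs, mul_zero,
    add_zero, Submodule.coe_norm]

lemma dist_sq_smul_add_coe (he : ‖e‖ = 1) (s t : ℝ) (y z : (ℝ ∙ e)ᗮ) :
    dist (s • e + (y : V)) (t • e + z) ^ 2 = (s - t) ^ 2 + dist y z ^ 2 := by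
  rw [dist_eq_norm, dist_eq_norm, ← norm_sq_smul_add_coe he]
  congr 2
  push_cast
  module

lemma inner_smul_add_orthogonalProjectionOnto (he : ‖e‖ = 1) (x : V) :
    inner ℝ e x • e + ((ℝ ∙ e)ᗮ.orthogonalProjectionOnto x : V) = x := by
  have h := (ℝ ∙ e).starProjection_add_starProjection_orthogonal x
  rwa [Submodule.starProjection_unit_singleton ℝ he] at h

lemma inner_add_smul_self (he : ‖e‖ = 1) (x : V) (s : ℝ) :
    inner ℝ e (x + s • e) = inner ℝ e x + s := by
  rw [inner_add_right, real_inner_smul_right, real_inner_self_eq_norm_sq, he]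
  ring

lemma orthogonalProjectionOnto_add_smul_self (x : V) (s : ℝ) :
    (ℝ ∙ e)ᗮ.orthogonalProjectionOnto (x + s • e) = (ℝ ∙ e)ᗮ.orthogonalProjectionOnto x := by
  rw [map_add, add_eq_left]
  exact Submodule.orthogonalProjectionOnto_orthogonal_apply_eq_zero
    (Submodule.smul_mem _ s (Submodule.mem_span_singleton_self e))

variable [FiniteDimensional ℝ V]

lemma finrank_orthogonal_span_singleton_add_one (he : ‖e‖ = 1) :
    Module.finrank ℝ (ℝ ∙ e)ᗮ + 1 = Module.finrank ℝ V := by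
  rw [← (ℝ ∙ e).finrank_add_finrank_orthogonal,
    finrank_span_singleton (norm_ne_zero_iff.1 (he ▸ one_ne_zero)), add_comm]

variable [MeasurableSpace V] [BorelSpace V]

lemma measurePreserving_smul_add_coe (he : ‖e‖ = 1) :
    MeasurePreserving fun p : ℝ × (ℝ ∙ e)ᗮ => p.1 • e + (p.2 : V) := by
  have hline := (LinearIsometryEquiv.toSpanUnitSingleton (𝕜 := ℝ) e he).measurePreserving.prod
    (MeasurePreserving.id (volume : Measure (ℝ ∙ e)ᗮ))
  have hsum := (ℝ ∙ e).orthogonalDecomposition.symm.measurePreserving.comp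
    (WithLp.volume_preserving_toLp (ℝ ∙ e) (ℝ ∙ e)ᗮ)
  exact hsum.comp hline

lemma measurePreserving_inner_orthogonalProjectionOnto (he : ‖e‖ = 1) :
    MeasurePreserving fun x : V => (inner ℝ e x, (ℝ ∙ e)ᗮ.orthogonalProjectionOnto x) := by
  have hmp := measurePreserving_smul_add_coe he
  have hmeas : Measurable fun x : V => (inner ℝ e x, (ℝ ∙ e)ᗮ.orthogonalProjectionOnto x) := by
    fun_prop
  have hinv : (fun x : V => (inner ℝ e x, (ℝ ∙ e)ᗮ.orthogonalProjectionOnto x)) ∘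
      (fun p : ℝ × (ℝ ∙ e)ᗮ => p.1 • e + (p.2 : V)) = id := by
    ext1 p
    exact Prod.ext (inner_smul_add_coe he _ _) (orthogonalProjectionOnto_smul_add_coe _ _)
  exact ⟨hmeas, by rw [← hmp.map_eq, Measure.map_map hmeas hmp.measurable, hinv, Measure.map_id]⟩

lemma ae_ae_smul_add_coe (he : ‖e‖ = 1) {p : V → Prop} (h : ∀ᵐ x, p x) :
    ∀ᵐ y : (ℝ ∙ e)ᗮ, ∀ᵐ t : ℝ, p (t • e + y) :=
  Measure.ae_ae_of_ae_prod ((Measure.measurePreserving_swap.quasiMeasurePreserving).ae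
    ((measurePreserving_smul_add_coe he).quasiMeasurePreserving.ae h))

lemma volume_eq_lintegral_volume_line (he : ‖e‖ = 1) {S : Set V} (hS : MeasurableSet S) :
    volume S = ∫⁻ y : (ℝ ∙ e)ᗮ, volume {t : ℝ | t • e + (y : V) ∈ S} := by
  have hmp := measurePreserving_smul_add_coe he
  rw [← hmp.measure_preimage hS.nullMeasurableSet, Measure.volume_eq_prod,
    Measure.prod_apply_symm (hmp.measurable hS)]
  rfl

lemma mul_volume_le_of_ae_le_volume_line (he : ‖e‖ = 1) {B : Set V}
    (hB : MeasurableSet B) {A : Set (ℝ ∙ e)ᗮ} {r : ℝ≥0∞}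
    (h : ∀ᵐ y : (ℝ ∙ e)ᗮ, y ∈ A → r ≤ volume {t : ℝ | t • e + (y : V) ∈ B}) :
    r * volume A ≤ volume B := by
  rw [volume_eq_lintegral_volume_line he hB]
  have hmeas : Measurable fun y : (ℝ ∙ e)ᗮ => volume {t : ℝ | t • e + (y : V) ∈ B} :=
    measurable_measure_prodMk_right ((measurePreserving_smul_add_coe he).measurable hB)
  exact (mul_le_mul_right (measure_mono_ae h) r).trans (mul_meas_ge_le_lintegral hmeas r)

end Lines

/-! ### Jumps of a covering of an interval by two sets -/

section Jump

variable {S T I U : Set ℝ} {x : ℝ}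

/-- Some point of `S` has a one-sided neighbourhood contained in `T`: a moving point can pass from
`S` to `T`, or from `T` to `S`, at a single instant. -/
def JumpsInto (S T : Set ℝ) : Prop :=
  ∃ p ∈ S, (∀ᶠ t in nhdsWithin p (Set.Ioi p), t ∈ T) ∨ ∀ᶠ t in nhdsWithin p (Set.Iio p), t ∈ T

lemma jumpsInto_of_isClosed_inter_uIcc {s : ℝ} (hx : x ∈ S) (hs : s ∉ S)
    (hST : Set.uIcc x s ⊆ S ∪ T) (hclosed : IsClosed (S ∩ Set.uIcc x s)) :
    JumpsInto S T := by
  have hcompact : IsCompact (S ∩ Set.uIcc x s) :=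
    isCompact_uIcc.of_isClosed_subset hclosed Set.inter_subset_right
  have hne : (S ∩ Set.uIcc x s).Nonempty := ⟨x, hx, Set.left_mem_uIcc⟩
  rcases le_total x s with hle | hle <;> simp only [Set.uIcc_of_le, Set.uIcc_of_ge, hle] at *
  · obtain ⟨p, ⟨hpS, hp⟩, hmax⟩ := hcompact.exists_isGreatest hne
    refine ⟨p, hpS, .inl ?_⟩
    filter_upwards [Ioo_mem_nhdsGT (hp.2.lt_of_ne fun h => hs (h ▸ hpS))] with t ht
    have htI : t ∈ Set.Icc x s := ⟨hp.1.trans ht.1.le, ht.2.le⟩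
    exact (hST htI).resolve_left fun h => (hmax ⟨h, htI⟩).not_gt ht.1
  · obtain ⟨p, ⟨hpS, hp⟩, hmin⟩ := hcompact.exists_isLeast hne
    refine ⟨p, hpS, .inr ?_⟩
    filter_upwards [Ioo_mem_nhdsLT (hp.1.lt_of_ne fun h => hs (h ▸ hpS))] with t ht
    have htI : t ∈ Set.Icc s x := ⟨ht.1.le, ht.2.le.trans hp.2⟩
    exact (hST htI).resolve_left fun h => (hmin ⟨h, htI⟩).not_gt ht.2

lemma jumpsInto_of_closure_inter_subset (hI : I.OrdConnected) (hU : U.OrdConnected)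
    (hUx : U ∈ nhds x) (hIST : I ⊆ S ∪ T) (hdisj : Disjoint S T) (hxI : x ∈ I)
    (hxT : x ∈ closure (T ∩ I)) (hD : closure (S ∩ I) ∩ closure (T ∩ I) ∩ U ⊆ S) (hx : x ∈ S) :
    JumpsInto S T := by
  obtain ⟨s, hsU, hsT, hsI⟩ := mem_closure_iff_nhds.1 hxT U hUx
  have hsubI : Set.uIcc x s ⊆ I := hI.uIcc_subset hxI hsI
  refine jumpsInto_of_isClosed_inter_uIcc hx (fun h => Set.disjoint_left.1 hdisj h hsT)
    (hsubI.trans hIST) (isClosed_of_closure_subset fun p hp => ?_)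
  have hpxs : p ∈ Set.uIcc x s := closure_minimal Set.inter_subset_right isClosed_Icc hp
  refine ⟨(hIST (hsubI hpxs)).elim id fun hpT => hD ⟨⟨?_, ?_⟩, ?_⟩, hpxs⟩
  · exact closure_mono (Set.inter_subset_inter_right S hsubI) hp
  · exact subset_closure ⟨hpT, hsubI hpxs⟩
  · exact hU.uIcc_subset (mem_of_mem_nhds hUx) hsU hpxs

lemma exists_ball_inter_subset_of_isClosed {X : Type*} [MetricSpace X] [CompleteSpace X]
    {ι : Type*} [Countable ι] {D : Set X} (hD : IsClosed D) (hne : D.Nonempty) {G : ι → Set X}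
    (hG : ∀ i, IsClosed (G i)) (hDG : D ⊆ ⋃ i, G i) :
    ∃ i, ∃ x ∈ D, ∃ δ > 0, D ∩ ball x δ ⊆ G i := by
  have : Nonempty D := hne.to_subtype
  have : CompleteSpace D := hD.completeSpace_coe
  obtain ⟨i, x, hx⟩ := nonempty_interior_of_iUnion_of_closed
    (f := fun i => (Subtype.val ⁻¹' G i : Set D))
    (fun i => (hG i).preimage continuous_subtype_val)
    (by rwa [← Set.preimage_iUnion, Set.preimage_eq_univ_iff, Subtype.range_coe])
  obtain ⟨δ, hδ, hball⟩ := Metric.mem_nhds_iff.1 (mem_interior_iff_mem_nhds.1 hx)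
  exact ⟨i, x, x.2, δ, hδ, fun t ht => hball (a := ⟨t, ht.1⟩) ht.2⟩

lemma uIcc_inter_closure_inter_closure_nonempty {a b : ℝ} (ha : a ∈ S) (hb : b ∈ T)
    (hST : Set.uIcc a b ⊆ S ∪ T) :
    (closure (S ∩ Set.uIcc a b) ∩ closure (T ∩ Set.uIcc a b)).Nonempty := by
  obtain ⟨d, -, hd⟩ := isPreconnected_closed_iff.1 (isPreconnected_uIcc (a := a) (b := b))
    (closure (S ∩ Set.uIcc a b)) (closure (T ∩ Set.uIcc a b)) isClosed_closure isClosed_closure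
    (fun p hp => (hST hp).imp (fun h => subset_closure ⟨h, hp⟩) fun h => subset_closure ⟨h, hp⟩)
    ⟨a, Set.left_mem_uIcc, subset_closure ⟨ha, Set.left_mem_uIcc⟩⟩
    ⟨b, Set.right_mem_uIcc, subset_closure ⟨hb, Set.right_mem_uIcc⟩⟩
  exact ⟨d, hd⟩

/-- Baire's theorem, applied to the common frontier of `S` and `T` in the interval, yields a
portion of that frontier which misses one of the two sets. -/
lemma jumpsInto_or_jumpsInto_of_uIcc_subset_union {a b : ℝ} (ha : a ∈ S) (hb : b ∈ T)
    (hST : Set.uIcc a b ⊆ S ∪ T) (hdisj : Disjoint S T) {G H : ℕ → Set ℝ}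
    (hG : ∀ j, IsClosed (G j)) (hH : ∀ j, IsClosed (H j)) (hSG : S ⊆ ⋃ j, G j)
    (hTH : T ⊆ ⋃ j, H j) (hGT : ∀ j, Disjoint (G j) T) (hHS : ∀ j, Disjoint (H j) S) :
    JumpsInto S T ∨ JumpsInto T S := by
  set I := Set.uIcc a b
  have hDI : closure (S ∩ I) ∩ closure (T ∩ I) ⊆ I := fun p hp =>
    closure_minimal Set.inter_subset_right isClosed_Icc hp.1
  have hcover : closure (S ∩ I) ∩ closure (T ∩ I) ⊆ ⋃ i, Sum.elim G H i := by
    rw [Set.iUnion_sumElim]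
    exact (hDI.trans hST).trans (Set.union_subset_union hSG hTH)
  obtain ⟨i, x, hx, δ, hδ, hball⟩ := exists_ball_inter_subset_of_isClosed
    (isClosed_closure.inter isClosed_closure)
    (uIcc_inter_closure_inter_closure_nonempty ha hb hST) (Sum.rec hG hH) hcover
  have hord : (ball x δ).OrdConnected := (convex_ball _ _).ordConnected
  rcases i with j | j
  · have hDS : closure (S ∩ I) ∩ closure (T ∩ I) ∩ ball x δ ⊆ S := fun t ht =>
      (hST (hDI ht.1)).resolve_right (Set.disjoint_left.1 (hGT j) (hball ht))
    exact .inl (jumpsInto_of_closure_inter_subset Set.ordConnected_uIcc hord (ball_mem_nhds _ hδ)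
      hST hdisj (hDI hx) hx.2 hDS (hDS ⟨hx, mem_ball_self hδ⟩))
  · have hDT : closure (T ∩ I) ∩ closure (S ∩ I) ∩ ball x δ ⊆ T := fun t ht =>
      (hST (hDI ht.1.symm)).resolve_left
        (Set.disjoint_left.1 (hHS j) (hball ⟨ht.1.symm, ht.2⟩))
    exact .inr (jumpsInto_of_closure_inter_subset Set.ordConnected_uIcc hord (ball_mem_nhds _ hδ)
      (Set.union_comm S T ▸ hST) hdisj.symm (hDI hx) hx.1 hDT
      (hDT ⟨hx.symm, mem_ball_self hδ⟩))

end Jump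

/-! ### Lines cross the essential boundary -/

section Crossing

variable {n : ℕ} {F : Set E[n]} {e : E[n]}

lemma ofReal_le_volume_line_compl_inter {y : (ℝ ∙ e)ᗮ} {b r : ℝ} {U : Set E[n]}
    (hmem : ∀ᵐ s : ℝ, s • e + (y : E[n]) ∈ F → HasDensity F (s • e + y) 1)
    (h0 : ∀ s ∈ Set.Ioo b (b + r), HasDensity F (s • e + (y : E[n])) 0)
    (hU : ∀ s ∈ Set.Ioo b (b + r), s • e + (y : E[n]) ∈ U) :
    .ofReal r ≤ volume {s : ℝ | s • e + (y : E[n]) ∈ Fᶜ ∩ U} := by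
  have hae : Set.Ioo b (b + r) ≤ᵐ[volume] {s : ℝ | s • e + (y : E[n]) ∈ Fᶜ ∩ U} := by
    filter_upwards [hmem] with s hs hsI
    exact ⟨fun hF => (h0 s hsI).not_hasDensity_one (hs hF), hU s hsI⟩
  calc ENNReal.ofReal r = volume (Set.Ioo b (b + r)) := by
        rw [Real.volume_Ioo, add_sub_cancel_left]
    _ ≤ _ := measure_mono_ae hae

/-- The projections along `e` of the points `x` of `denseAtScales F η R` with height in `I` such
that `F` has density zero along the whole open segment from `x` to `x + R • e`. -/
def abruptExits (F : Set E[n]) (e : E[n]) (η : ℝ≥0∞) (R : ℝ) (I : Set ℝ) : Set (ℝ ∙ e)ᗮ :=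
  {y | ∃ t ∈ I, t • e + (y : E[n]) ∈ denseAtScales F η R ∧
    ∀ s ∈ Set.Ioo t (t + R), HasDensity F (s • e + (y : E[n])) 0}

lemma mul_volume_abruptExits_inter_closedBall_le (he : ‖e‖ = 1) (hF : MeasurableSet F)
    {η : ℝ≥0∞} {R : ℝ} (a : ℝ) (z : (ℝ ∙ e)ᗮ) {r : ℝ} (hr : r ∈ Set.Ioo 0 (R / 3)) :
    .ofReal r * volume (abruptExits F e η R (Set.Icc a (a + R / 3)) ∩ closedBall z r) ≤
      η * volume (ball (0 : E[n]) (3 * r)) := by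
  set A := abruptExits F e η R (Set.Icc a (a + R / 3))
  rcases (A ∩ closedBall z r).eq_empty_or_nonempty with hempty | hne
  · simp only [hempty, measure_empty, mul_zero, zero_le]
  let heights : Set ℝ := {t | ∃ y ∈ closedBall z r, t ∈ Set.Icc a (a + R / 3) ∧
    t • e + (y : E[n]) ∈ denseAtScales F η R ∧
    ∀ s ∈ Set.Ioo t (t + R), HasDensity F (s • e + (y : E[n])) 0}
  have hheights : heights.Nonempty := by
    obtain ⟨y, ⟨t, ht, h⟩, hy⟩ := hne
    exact ⟨t, y, hy, ht, h⟩
  have hbdd : BddAbove heights := ⟨a + R / 3, fun t ⟨_, _, ht, _⟩ => ht.2⟩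
  -- Above an almost highest exit, every line through `A` near `z` has already left `F`.
  obtain ⟨t₁, ⟨y₁, hy₁, ht₁, hdense, -⟩, hsup⟩ :=
    exists_lt_of_lt_csSup hheights (sub_lt_self (sSup heights) hr.1)
  calc _ ≤ volume (Fᶜ ∩ ball (t₁ • e + (y₁ : E[n])) (3 * r)) := by
        refine mul_volume_le_of_ae_le_volume_line he (hF.compl.inter measurableSet_ball) ?_
        filter_upwards [ae_ae_smul_add_coe he (ae_hasDensity_one_of_mem hF)] with y hmem
        rintro ⟨⟨t, ht, hty, h0⟩, hy⟩
        have htsup : t ≤ sSup heights := le_csSup hbdd ⟨y, hy, ht, hty, h0⟩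
        refine ofReal_le_volume_line_compl_inter (b := t₁ + r) hmem (fun s hs => h0 s ⟨?_, ?_⟩)
          fun s hs => ?_
        · linarith [hs.1]
        · linarith [hs.2, hr.2, ht.1, ht₁.2]
        · have hdist : dist y y₁ ≤ 2 * r := by
            linarith [dist_triangle_right y y₁ z, mem_closedBall.1 hy, mem_closedBall.1 hy₁]
          refine lt_of_pow_lt_pow_left₀ 2 (mul_nonneg zero_le_three hr.1.le) ?_
          rw [dist_sq_smul_add_coe he]
          nlinarith [hs.1, hs.2, hr.1, dist_nonneg (x := y) (y := y₁)]
    _ ≤ η * volume (ball (t₁ • e + (y₁ : E[n])) (3 * r)) :=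
        hdense (3 * r) ⟨by linarith [hr.1], by linarith [hr.2]⟩
    _ = η * volume (ball (0 : E[n]) (3 * r)) := by rw [Measure.addHaar_ball_center]

lemma volume_abruptExits_eq_zero (he : ‖e‖ = 1) (hF : MeasurableSet F) {η : ℝ≥0∞}
    (hη : η * volume (ball (0 : E[n]) 3) < volume (ball (0 : (ℝ ∙ e)ᗮ) 1)) {R : ℝ} (hR : 0 < R)
    (a : ℝ) : volume (abruptExits F e η R (Set.Icc a (a + R / 3))) = 0 := by
  set A := abruptExits F e η R (Set.Icc a (a + R / 3))
  set c := η * volume (ball (0 : E[n]) 3) / volume (ball (0 : (ℝ ∙ e)ᗮ) 1)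
  have hω : volume (ball (0 : (ℝ ∙ e)ᗮ) 1) ≠ 0 := (measure_ball_pos _ _ one_pos).ne'
  have hn : Module.finrank ℝ (ℝ ∙ e)ᗮ + 1 = n := by
    rw [finrank_orthogonal_span_singleton_add_one he, finrank_euclideanSpace_fin]
  have hc : c < 1 := ENNReal.div_lt_of_lt_mul (by rwa [one_mul])
  have hratio : ∀ y, ∀ r ∈ Set.Ioo 0 (R / 3),
      volume (A ∩ closedBall y r) / volume (closedBall y r) ≤ c := fun y r hr => by
    have hrn : ENNReal.ofReal r ≠ 0 := (ENNReal.ofReal_pos.2 hr.1).ne'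
    refine ENNReal.div_le_of_le_mul ((ENNReal.mul_le_mul_iff_right hrn ofReal_ne_top).1 ?_)
    refine (mul_volume_abruptExits_inter_closedBall_le he hF a y hr).trans_eq ?_
    rw [mul_comm 3 r, Measure.addHaar_ball_mul_of_pos _ _ hr.1,
      Measure.addHaar_closedBall _ _ hr.1.le, finrank_euclideanSpace_fin]
    nth_rw 1 [← hn]
    rw [pow_succ, ENNReal.ofReal_mul (pow_nonneg hr.1.le _)]
    calc _ = .ofReal r * (.ofReal (r ^ Module.finrank ℝ (ℝ ∙ e)ᗮ) *
            (η * volume (ball (0 : E[n]) 3))) := by ring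
      _ = .ofReal r * (.ofReal (r ^ Module.finrank ℝ (ℝ ∙ e)ᗮ) *
            (c * volume (ball (0 : (ℝ ∙ e)ᗮ) 1))) := by
          rw [ENNReal.div_mul_cancel hω measure_ball_lt_top.ne]
      _ = _ := by ring
  have hfalse : ∀ᵐ _ ∂volume.restrict A, False := by
    filter_upwards [Besicovitch.ae_tendsto_measure_inter_div volume A] with y hy
    refine hc.not_ge (le_of_tendsto hy ?_)
    filter_upwards [Ioo_mem_nhdsGT (show 0 < R / 3 by positivity)] with r hr using hratio y r hr
  rwa [eventually_false_iff_eq_bot, ae_eq_bot, Measure.restrict_eq_zero] at hfalse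

lemma ae_not_eventually_nhdsGT_hasDensity_zero (he : ‖e‖ = 1) (hF : MeasurableSet F) :
    ∀ᵐ y : (ℝ ∙ e)ᗮ, ∀ t : ℝ, HasDensity F (t • e + (y : E[n])) 1 →
      ¬ ∀ᶠ s in nhdsWithin t (Set.Ioi t), HasDensity F (s • e + (y : E[n])) 0 := by
  obtain ⟨η, hη0, hη⟩ := ENNReal.exists_nnreal_pos_mul_lt
    (measure_ball_lt_top (μ := volume) (x := (0 : E[n])) (r := 3)).ne
    (measure_ball_pos volume (0 : (ℝ ∙ e)ᗮ) one_pos).ne'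
  have hnull : ∀ᵐ y : (ℝ ∙ e)ᗮ, ∀ (j : ℕ) (i : ℤ), y ∉ abruptExits F e η (1 / ((j : ℝ) + 1))
      (Set.Icc (i * (1 / ((j : ℝ) + 1) / 3)) (i * (1 / ((j : ℝ) + 1) / 3) +
        1 / ((j : ℝ) + 1) / 3)) := by
    simp only [ae_all_iff]
    exact fun j i => measure_eq_zero_iff_ae_notMem.1
      (volume_abruptExits_eq_zero he hF hη Nat.one_div_pos_of_nat _)
  filter_upwards [hnull] with y hy t ht hev
  obtain ⟨R, hR, hdense⟩ := ht.exists_mem_denseAtScales hF (ENNReal.coe_ne_zero.2 hη0.ne')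
  obtain ⟨b, hb, hIoo⟩ := mem_nhdsGT_iff_exists_Ioo_subset.1 hev
  obtain ⟨j, hj⟩ := exists_nat_one_div_lt (lt_min hR (sub_pos.2 hb))
  have hlen : 0 < 1 / ((j : ℝ) + 1) / 3 := div_pos Nat.one_div_pos_of_nat three_pos
  have hfloor := Int.floor_le (t / (1 / ((j : ℝ) + 1) / 3))
  have hlt := Int.lt_floor_add_one (t / (1 / ((j : ℝ) + 1) / 3))
  rw [le_div_iff₀ hlen] at hfloor
  rw [div_lt_iff₀ hlen, add_one_mul] at hlt
  exact hy j ⌊t / (1 / ((j : ℝ) + 1) / 3)⌋ ⟨t, ⟨hfloor, hlt.le⟩,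
    denseAtScales_anti F η (hj.le.trans (min_le_left _ _)) hdense, fun s hs => hIoo ⟨hs.1,
      by linarith [hs.2, min_le_right R (b - t)]⟩⟩

lemma reflection_smul_add_coe (t : ℝ) (y : (ℝ ∙ e)ᗮ) :
    (ℝ ∙ e)ᗮ.reflection (t • e + (y : E[n])) = (-t) • e + (y : E[n]) := by
  rw [map_add, map_smul, Submodule.reflection_orthogonalComplement_singleton_eq_neg,
    Submodule.reflection_mem_subspace_eq_self y.2, smul_neg, neg_smul]

lemma ae_not_eventually_nhdsLT_hasDensity_zero (he : ‖e‖ = 1) (hF : MeasurableSet F) :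
    ∀ᵐ y : (ℝ ∙ e)ᗮ, ∀ t : ℝ, HasDensity F (t • e + (y : E[n])) 1 →
      ¬ ∀ᶠ s in nhdsWithin t (Set.Iio t), HasDensity F (s • e + (y : E[n])) 0 := by
  have href := ae_not_eventually_nhdsGT_hasDensity_zero he
    ((ℝ ∙ e)ᗮ.reflection.continuous.measurable hF)
  filter_upwards [href] with y hy t ht hev
  simp only [hasDensity_preimage, reflection_smul_add_coe] at hy
  refine hy (-t) (by rwa [neg_neg]) ?_
  exact (neg_neg t ▸ tendsto_neg_nhdsGT (a := -t)).eventually hev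

lemma ae_not_jumpsInto_hasDensity_zero (he : ‖e‖ = 1) (hF : MeasurableSet F) :
    ∀ᵐ y : (ℝ ∙ e)ᗮ, ¬ JumpsInto {t | HasDensity F (t • e + (y : E[n])) 1}
      {t | HasDensity F (t • e + (y : E[n])) 0} := by
  filter_upwards [ae_not_eventually_nhdsGT_hasDensity_zero he hF,
    ae_not_eventually_nhdsLT_hasDensity_zero he hF] with y hright hleft
  rintro ⟨t, ht, h | h⟩
  exacts [hright t ht h, hleft t ht h]

lemma exists_isClosed_iUnion_of_hasDensity_one (hF : MeasurableSet F) (y : E[n]) :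
    ∃ G : ℕ → Set ℝ, (∀ j, IsClosed (G j)) ∧
      {t : ℝ | HasDensity F (t • e + y) 1} ⊆ ⋃ j, G j ∧
      ∀ j, Disjoint (G j) {t : ℝ | HasDensity F (t • e + y) 0} := by
  have hhalf : (2⁻¹ : ℝ≥0∞) < 1 := ENNReal.inv_lt_one.2 ENNReal.one_lt_two
  refine ⟨fun j => (fun t : ℝ => t • e + y) ⁻¹' denseAtScales F 2⁻¹ (1 / ((j : ℝ) + 1)),
    fun j => (isClosed_denseAtScales hhalf.ne_top _).preimage (by fun_prop), fun t ht => ?_,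
    fun j => Set.disjoint_left.2 fun t ht =>
      not_hasDensity_zero_of_mem_denseAtScales hF hhalf Nat.one_div_pos_of_nat ht⟩
  obtain ⟨R, hR, hdense⟩ := HasDensity.exists_mem_denseAtScales hF ht
    (ENNReal.inv_ne_zero.2 (ENNReal.ofNat_ne_top (n := 2)))
  obtain ⟨j, hj⟩ := exists_nat_one_div_lt hR
  exact Set.mem_iUnion.2 ⟨j, denseAtScales_anti F _ hj.le hdense⟩

lemma ae_exists_mem_essBoundary_uIcc (he : ‖e‖ = 1) (hF : MeasurableSet F) :
    ∀ᵐ y : (ℝ ∙ e)ᗮ, ∀ a b : ℝ, HasDensity F (a • e + (y : E[n])) 1 →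
      HasDensity F (b • e + (y : E[n])) 0 →
      ∃ t ∈ Set.uIcc a b, t • e + (y : E[n]) ∈ essBoundary F := by
  filter_upwards [ae_not_jumpsInto_hasDensity_zero he hF,
    ae_not_jumpsInto_hasDensity_zero he hF.compl] with y hF1 hF0 a b ha hb
  by_contra! hnot
  simp only [hasDensity_compl_one hF, hasDensity_compl_zero hF] at hF0
  obtain ⟨G, hG, hSG, hGT⟩ := exists_isClosed_iUnion_of_hasDensity_one (e := e) hF y
  obtain ⟨H, hH, hTH, hHS⟩ := exists_isClosed_iUnion_of_hasDensity_one (e := e) hF.compl y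
  simp only [hasDensity_compl_one hF, hasDensity_compl_zero hF] at hTH hHS
  refine (jumpsInto_or_jumpsInto_of_uIcc_subset_union ha hb (fun t ht => ?_) ?_ hG hH hSG hTH
    hGT hHS).elim hF1 hF0
  · exact or_comm.1 (or_iff_not_and_not.2 (hnot t ht))
  · exact Set.disjoint_left.2 fun t h1 h0 => HasDensity.not_hasDensity_one h0 h1

end Crossing

/-! ### Translating a set across its essential boundary -/

lemma euclideanHausdorffMeasure_image_le {X Y : Type*} [MetricSpace X] [MeasurableSpace X]
    [BorelSpace X] [MetricSpace Y] [MeasurableSpace Y] [BorelSpace Y] {K : NNReal} {f : X → Y}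
    {s : Set X} (hf : LipschitzOnWith K f s) (k : ℕ) :
    (μHE[k] : Measure Y) (f '' s) ≤ (K : ℝ≥0∞) ^ k * (μHE[k] : Measure X) s := by
  have h := hf.hausdorffMeasure_image_le (d := k) (Nat.cast_nonneg k)
  rw [ENNReal.rpow_natCast] at h
  simp_rw [Measure.euclideanHausdorffMeasure_def, Measure.smul_apply, ENNReal.smul_def,
    smul_eq_mul]
  rw [mul_left_comm]
  gcongr

section Sweep

variable {V : Type*} [NormedAddCommGroup V] [InnerProductSpace ℝ V] [FiniteDimensional ℝ V]
  [MeasurableSpace V] [BorelSpace V] {e : V} {k : ℕ}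

lemma volume_image_orthogonalProjectionOnto_le (he : ‖e‖ = 1) (hk : Module.finrank ℝ V = k + 1)
    (S : Set V) : volume ((ℝ ∙ e)ᗮ.orthogonalProjectionOnto '' S) ≤ μHE[k] S := by
  have hlip : LipschitzWith 1 (ℝ ∙ e)ᗮ.orthogonalProjectionOnto :=
    (ℝ ∙ e)ᗮ.orthogonalProjectionOnto.lipschitz.weaken
      (Submodule.orthogonalProjectionOnto_norm_le _)
  have hrank : Module.finrank ℝ (ℝ ∙ e)ᗮ = k :=
    add_right_cancel ((finrank_orthogonal_span_singleton_add_one he).trans hk)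
  rw [← InnerProductSpace.euclideanHausdorffMeasure_eq_volume, hrank]
  simpa only [ENNReal.coe_one, one_pow, one_mul] using
    euclideanHausdorffMeasure_image_le (hlip.lipschitzOnWith (s := S)) k

lemma volume_inner_mem_orthogonalProjectionOnto_mem_le (he : ‖e‖ = 1) (I : Set ℝ)
    (A : Set (ℝ ∙ e)ᗮ) :
    volume {x : V | inner ℝ e x ∈ I ∧ (ℝ ∙ e)ᗮ.orthogonalProjectionOnto x ∈ A} ≤
      volume I * volume A := by
  have hmp := measurePreserving_inner_orthogonalProjectionOnto he
  rw [← Measure.prod_prod, ← Measure.volume_eq_prod, ← hmp.map_eq]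
  exact Measure.le_map_apply hmp.aemeasurable (I ×ˢ A)

lemma volume_sweep_le_ofReal_add_mul (he : ‖e‖ = 1) (hk : Module.finrank ℝ V = k + 1)
    (N : Set V) {τ θ : ℝ} (hθ : 0 < θ) :
    volume {x | ∃ s ∈ Set.Icc 0 τ, x + s • e ∈ N} ≤ ENNReal.ofReal (θ + τ) * μHE[k] N := by
  have hfloor : Measurable fun x : V => ⌊inner ℝ e x / θ⌋ := by fun_prop
  let slab : ℤ → Set V := fun i => (fun x => ⌊inner ℝ e x / θ⌋) ⁻¹' {i}
  have hslab : ∀ i, MeasurableSet (slab i) := fun i => hfloor (measurableSet_singleton i)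
  have hcover : ⋃ i, slab i = Set.univ := Set.iUnion_eq_univ_iff.2 fun x => ⟨_, rfl⟩
  have hsub : {x | ∃ s ∈ Set.Icc 0 τ, x + s • e ∈ N} ⊆ ⋃ i : ℤ,
      {x | inner ℝ e x ∈ Set.Icc (i * θ - τ) (i * θ + θ) ∧ (ℝ ∙ e)ᗮ.orthogonalProjectionOnto x ∈
        (ℝ ∙ e)ᗮ.orthogonalProjectionOnto '' (slab i ∩ N)} := by
    rintro x ⟨s, hs, hN⟩
    have hle := Int.floor_le (inner ℝ e (x + s • e) / θ)
    have hlt := Int.lt_floor_add_one (inner ℝ e (x + s • e) / θ)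
    rw [le_div_iff₀ hθ] at hle
    rw [div_lt_iff₀ hθ] at hlt
    rw [inner_add_smul_self he] at hle hlt
    refine Set.mem_iUnion.2 ⟨⌊inner ℝ e (x + s • e) / θ⌋, ⟨?_, ?_⟩, x + s • e, ⟨rfl, hN⟩,
      orthogonalProjectionOnto_add_smul_self x s⟩
    · rw [inner_add_smul_self he]
      linarith [hs.2]
    · rw [inner_add_smul_self he]
      linarith [hs.1]
  calc _ ≤ ∑' i : ℤ, _ := (measure_mono hsub).trans (measure_iUnion_le _)
    _ ≤ ∑' i : ℤ, ENNReal.ofReal (θ + τ) * (μHE[k].restrict N) (slab i) := by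
        refine ENNReal.tsum_le_tsum fun i =>
          (volume_inner_mem_orthogonalProjectionOnto_mem_le he _ _).trans ?_
        rw [Real.volume_Icc, add_sub_sub_cancel, Measure.restrict_apply (hslab i)]
        gcongr
        exact volume_image_orthogonalProjectionOnto_le he hk _
    _ = ENNReal.ofReal (θ + τ) * μHE[k] N := by
        rw [ENNReal.tsum_mul_left, ← measure_iUnion (pairwise_disjoint_fiber _) hslab,
          hcover, Measure.restrict_apply_univ]

lemma volume_sweep_le_ofReal_mul (he : ‖e‖ = 1) (hk : Module.finrank ℝ V = k + 1) (N : Set V)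
    {τ : ℝ} (hτ : 0 < τ) :
    volume {x | ∃ s ∈ Set.Icc 0 τ, x + s • e ∈ N} ≤ ENNReal.ofReal τ * μHE[k] N := by
  have hofReal : Tendsto (fun θ : ℝ => ENNReal.ofReal (θ + τ)) (nhdsWithin 0 (Set.Ioi 0))
      (nhds (ENNReal.ofReal τ)) :=
    ENNReal.tendsto_ofReal (tendsto_nhdsWithin_of_tendsto_nhds
      ((continuous_add_const τ).tendsto' 0 τ (zero_add τ)))
  refine ge_of_tendsto
    (ENNReal.Tendsto.mul_const hofReal (Or.inl (by simpa only [ne_eq, ofReal_eq_zero, not_le]))) ?_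
  filter_upwards [self_mem_nhdsWithin] with θ hθ
    using volume_sweep_le_ofReal_add_mul he hk N hθ

end Sweep

section Translation

variable {k : ℕ} {F : Set E[k + 1]}

lemma volume_translate_diff_inter_ball_le_of_unit {e : E[k + 1]} (he : ‖e‖ = 1)
    (hF : MeasurableSet F) (x : E[k + 1]) (κ : ℝ) {τ : ℝ} (hτ : 0 < τ) :
    volume ({z | z + τ • e ∈ F ∧ z ∉ F} ∩ ball x κ) ≤
      ENNReal.ofReal τ * μHE[k] (essBoundary F ∩ ball x (κ + τ)) := by
  refine le_trans (measure_mono_ae ?_)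
    (volume_sweep_le_ofReal_mul he (finrank_euclideanSpace_fin (n := k + 1)) _ hτ)
  have hproj : ∀ᵐ z, ∀ a b : ℝ,
      HasDensity F (a • e + ((ℝ ∙ e)ᗮ.orthogonalProjectionOnto z : E[k + 1])) 1 →
      HasDensity F (b • e + ((ℝ ∙ e)ᗮ.orthogonalProjectionOnto z : E[k + 1])) 0 →
      ∃ t ∈ Set.uIcc a b,
        t • e + ((ℝ ∙ e)ᗮ.orthogonalProjectionOnto z : E[k + 1]) ∈ essBoundary F :=
    (Measure.quasiMeasurePreserving_snd.comp
      (measurePreserving_inner_orthogonalProjectionOnto he).quasiMeasurePreserving).ae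
        (ae_exists_mem_essBoundary_uIcc he hF)
  have hmem := (measurePreserving_add_right volume (τ • e)).quasiMeasurePreserving.ae
    (ae_hasDensity_one_of_mem hF)
  filter_upwards [hproj, hmem, ae_hasDensity_one_of_mem hF.compl] with z hz h1 h0
  rintro ⟨⟨hzτ, hzF⟩, hzball⟩
  have hline : ∀ s : ℝ, z + s • e = (inner ℝ e z + s) • e +
      ((ℝ ∙ e)ᗮ.orthogonalProjectionOnto z : E[k + 1]) := fun s => by
    nth_rw 1 [← inner_smul_add_orthogonalProjectionOnto he z]
    module
  obtain ⟨t, ht, htF⟩ := hz (inner ℝ e z + τ) (inner ℝ e z) (hline τ ▸ h1 hzτ)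
    ((inner_smul_add_orthogonalProjectionOnto he z).symm ▸ (hasDensity_compl_one hF).1 (h0 hzF))
  rw [Set.uIcc_of_ge (le_add_of_nonneg_right hτ.le)] at ht
  have hs : t - inner ℝ e z ∈ Set.Icc 0 τ := ⟨by linarith [ht.1], by linarith [ht.2]⟩
  refine ⟨t - inner ℝ e z, hs, ?_, ?_⟩
  · rwa [hline, add_sub_cancel]
  · calc dist (z + (t - inner ℝ e z) • e) x ≤ dist z x + ‖(t - inner ℝ e z) • e‖ := by
          rw [dist_eq_norm, add_sub_right_comm, dist_eq_norm]
          exact norm_add_le _ _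
      _ < κ + τ := by
          rw [norm_smul, he, mul_one, Real.norm_of_nonneg hs.1]
          exact add_lt_add_of_lt_of_le hzball hs.2

lemma volume_inter_ball_add_le (hF : MeasurableSet F) (x v : E[k + 1]) (κ : ℝ) :
    volume (F ∩ ball (x + v) κ) ≤ volume (F ∩ ball x κ) +
      ENNReal.ofReal ‖v‖ * μHE[k] (essBoundary F ∩ ball x (κ + ‖v‖)) := by
  rcases eq_or_ne v 0 with rfl | hv
  · simp only [add_zero, norm_zero, ofReal_zero, zero_mul, le_refl]
  have hpos : 0 < ‖v‖ := norm_pos_iff.2 hv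
  have he : ‖‖v‖⁻¹ • v‖ = 1 := norm_smul_inv_norm hv
  have htranslate := volume_translate_diff_inter_ball_le_of_unit he hF x κ hpos
  rw [smul_inv_smul₀ hpos.ne'] at htranslate
  calc volume (F ∩ ball (x + v) κ) = volume ((· + v) ⁻¹' (F ∩ ball (x + v) κ)) :=
        (measure_preimage_add_right _ _ _).symm
    _ ≤ volume (F ∩ ball x κ ∪ {z | z + v ∈ F ∧ z ∉ F} ∩ ball x κ) := by
        refine measure_mono fun z ⟨hzF, hzball⟩ => ?_
        have hz : z ∈ ball x κ := by simpa only [mem_ball, dist_add_right] using hzball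
        exact (em (z ∈ F)).imp (fun h => ⟨h, hz⟩) fun h => ⟨⟨hzF, h⟩, hz⟩
    _ ≤ _ := (measure_union_le _ _).trans (by gcongr)

end Translation

/-! ### The isoperimetric inequality -/

lemma measurable_measure_ball {n : ℕ} (ν : Measure E[n]) [SFinite ν] (r : ℝ) :
    Measurable fun x => ν (ball x r) := by
  have hS : MeasurableSet {p : E[n] × E[n] | dist p.2 p.1 < r} :=
    measurableSet_lt (by fun_prop) measurable_const
  exact measurable_measure_prodMk_left hS

lemma lintegral_measure_ball {n : ℕ} (ν : Measure E[n]) [SFinite ν] (r : ℝ) :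
    ∫⁻ x, ν (ball x r) = ν Set.univ * volume (ball (0 : E[n]) r) := by
  have hS : MeasurableSet {p : E[n] × E[n] | dist p.2 p.1 < r} :=
    measurableSet_lt (by fun_prop) measurable_const
  calc ∫⁻ x, ν (ball x r) = (volume.prod ν) {p : E[n] × E[n] | dist p.2 p.1 < r} :=
        (Measure.prod_apply hS).symm
    _ = ∫⁻ y, volume (ball y r) ∂ν := by
        rw [Measure.prod_apply_symm hS]
        exact lintegral_congr fun y => congrArg volume (Set.ext fun x => mem_ball'.symm)
    _ = ν Set.univ * volume (ball (0 : E[n]) r) := by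
        simp only [Measure.addHaar_ball_center, lintegral_const, mul_comm]

section Isoperimetric

variable {k : ℕ} {F : Set E[k + 1]}

lemma mul_isoperimetricProfile_le_mul_volume_ball_add (hF : MeasurableSet F) (hfin : volume F ≠ ⊤)
    {κ δ : ℝ} (hκ : 0 < κ) (hδ : 0 < δ) {σ : ℝ≥0∞}
    (hσ : volume {x | σ ≤ volume (F ∩ ball x κ)} ≠ 0) :
    σ * isoperimetricProfile (k + 1) (volume {x | σ ≤ volume (F ∩ ball x κ)}) ≤
      μHE[k] (essBoundary F) * volume (ball (0 : E[k + 1]) (κ + δ)) := by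
  rcases eq_or_ne (μHE[k] (essBoundary F)) ⊤ with htop | htop
  · rw [htop, ENNReal.top_mul (measure_ball_pos _ _ (add_pos hκ hδ)).ne']
    exact le_top
  let ν : Measure E[k + 1] := μHE[k].restrict (essBoundary F)
  have : IsFiniteMeasure ν := isFiniteMeasure_restrict.2 htop
  have hball : ∀ x, volume (F ∩ ball x κ) = volume.restrict F (ball x κ) := fun x => by
    rw [Measure.restrict_apply measurableSet_ball, Set.inter_comm]
  simp only [hball] at hσ ⊢
  rw [← Measure.restrict_apply_univ (essBoundary F), ← lintegral_measure_ball ν]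
  refine mul_isoperimetricProfile_le_lintegral k.succ_ne_zero
    (measurable_measure_ball _ κ) (measurable_measure_ball ν (κ + δ)) ?_ hδ ?_ hσ
  · rw [lintegral_measure_ball, Measure.restrict_apply_univ]
    exact ENNReal.mul_ne_top hfin measure_ball_lt_top.ne
  · intro x y hy
    rw [← hball, ← hball, Measure.restrict_apply measurableSet_ball, Set.inter_comm (ball _ _)]
    refine (volume_inter_ball_add_le hF x y κ).trans ?_
    gcongr

lemma mul_isoperimetricProfile_le_mul_volume_ball (hF : MeasurableSet F) (hfin : volume F ≠ ⊤)
    {κ : ℝ} (hκ : 0 < κ) {σ : ℝ≥0∞} (hσ : volume {x | σ ≤ volume (F ∩ ball x κ)} ≠ 0) :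
    σ * isoperimetricProfile (k + 1) (volume {x | σ ≤ volume (F ∩ ball x κ)}) ≤
      μHE[k] (essBoundary F) * volume (ball (0 : E[k + 1]) κ) := by
  have hlim : Tendsto (fun δ => ENNReal.ofReal ((κ + δ) ^ (k + 1)) * volume (ball (0 : E[k + 1]) 1))
      (nhdsWithin 0 (Set.Ioi 0)) (nhds (volume (ball (0 : E[k + 1]) κ))) := by
    rw [Measure.addHaar_ball_of_pos _ _ hκ, finrank_euclideanSpace_fin]
    have hcont : Continuous fun δ : ℝ => (κ + δ) ^ (k + 1) := by fun_prop
    refine ENNReal.Tendsto.mul_const (ENNReal.tendsto_ofReal ?_) (Or.inr measure_ball_lt_top.ne)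
    exact (hcont.tendsto' 0 _ (by rw [add_zero])).mono_left nhdsWithin_le_nhds
  refine ge_of_tendsto (ENNReal.Tendsto.const_mul hlim (Or.inl (measure_ball_pos _ _ hκ).ne')) ?_
  filter_upwards [self_mem_nhdsWithin] with δ hδ
  have h := mul_isoperimetricProfile_le_mul_volume_ball_add hF hfin hκ hδ hσ
  rwa [Measure.addHaar_ball_of_pos _ _ (add_pos hκ hδ), finrank_euclideanSpace_fin] at h

lemma mul_isoperimetricProfile_volume_denseAtScales_le (hF : MeasurableSet F)
    (hfin : volume F ≠ ⊤) {η : ℝ≥0∞} {R : ℝ} (hR : 0 < R)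
    (hpos : volume (denseAtScales F η R) ≠ 0) :
    (1 - η) * isoperimetricProfile (k + 1) (volume (denseAtScales F η R)) ≤
      μHE[k] (essBoundary F) := by
  obtain ⟨κ, hκ⟩ := Set.nonempty_Ioo.2 hR
  have hω : 0 < volume (ball (0 : E[k + 1]) κ) := measure_ball_pos _ _ hκ.1
  have hsub : denseAtScales F η R ⊆
      {x | (1 - η) * volume (ball (0 : E[k + 1]) κ) ≤ volume (F ∩ ball x κ)} := fun x hx => by
    rw [Set.mem_ofPred_eq, ENNReal.sub_mul fun _ _ => measure_ball_lt_top.ne, one_mul,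
      ← Measure.addHaar_ball_center volume x, tsub_le_iff_right]
    calc volume (ball x κ) = volume (F ∩ ball x κ) + volume (Fᶜ ∩ ball x κ) :=
          (volume_inter_add_volume_compl_inter hF _).symm
      _ ≤ _ := by
          gcongr
          exact hx κ hκ
  have h := mul_isoperimetricProfile_le_mul_volume_ball hF hfin hκ.1
    ((pos_iff_ne_zero.2 hpos).trans_le (measure_mono hsub)).ne'
  rw [mul_right_comm, ENNReal.mul_le_mul_iff_left hω.ne' measure_ball_lt_top.ne] at h
  refine le_trans ?_ h
  gcongr
  exact monotone_isoperimetricProfile _ (measure_mono hsub)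

lemma one_sub_mul_isoperimetricProfile_volume_le (hF : MeasurableSet F) (hfin : volume F ≠ ⊤)
    (hpos : volume F ≠ 0) {η : ℝ≥0∞} (hη : η ≠ 0) :
    (1 - η) * isoperimetricProfile (k + 1) (volume F) ≤ μHE[k] (essBoundary F) := by
  let D : ℕ → Set E[k + 1] := fun j => denseAtScales F η (1 / ((j : ℝ) + 1))
  have hmono : Monotone D := fun i j hij =>
    denseAtScales_anti F η (one_div_le_one_div_of_le i.cast_add_one_pos (by gcongr))
  have hcover : volume F ≤ volume (⋃ j, D j) := by
    refine measure_mono_ae ?_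
    filter_upwards [ae_hasDensity_one_of_mem hF] with x hx hxF
    obtain ⟨R, hR, hdense⟩ := (hx hxF).exists_mem_denseAtScales hF hη
    obtain ⟨j, hj⟩ := exists_nat_one_div_lt hR
    exact Set.mem_iUnion.2 ⟨j, denseAtScales_anti F _ hj.le hdense⟩
  have hlim : Tendsto (fun j => volume (D j)) atTop (nhds (volume (⋃ j, D j))) :=
    tendsto_measure_iUnion_atTop hmono
  have hprofile := ((continuous_isoperimetricProfile (k + 1)).tendsto _).comp hlim
  refine (mul_le_mul_right (monotone_isoperimetricProfile _ hcover) _).trans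
    (le_of_tendsto (ENNReal.Tendsto.const_mul hprofile (Or.inr (ENNReal.sub_ne_top one_ne_top))) ?_)
  filter_upwards [hlim.eventually_ne ((pos_iff_ne_zero.2 hpos).trans_le hcover).ne'] with j hj
    using mul_isoperimetricProfile_volume_denseAtScales_le hF hfin Nat.one_div_pos_of_nat hj

theorem isoperimetricProfile_volume_le (hF : MeasurableSet F) (hfin : volume F ≠ ⊤)
    (hpos : volume F ≠ 0) :
    isoperimetricProfile (k + 1) (volume F) ≤ μHE[k] (essBoundary F) := by
  have hlim : Tendsto (fun j : ℕ => 1 - (j : ℝ≥0∞)⁻¹) atTop (nhds 1) := by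
    simpa only [tsub_zero] using ENNReal.Tendsto.sub (tendsto_const_nhds (x := 1))
      ENNReal.tendsto_inv_nat_nhds_zero (Or.inl one_ne_top)
  have hmul := ENNReal.Tendsto.mul_const (b := isoperimetricProfile (k + 1) (volume F)) hlim
    (Or.inl one_ne_zero)
  rw [one_mul] at hmul
  exact le_of_tendsto' hmul fun j => one_sub_mul_isoperimetricProfile_volume_le hF hfin hpos
    (ENNReal.inv_ne_zero.2 (ENNReal.natCast_ne_top j))

end Isoperimetric

/-! ### Truncating a set by a ball -/

theorem HasDensity.zero_mono {n : ℕ} {F G : Set E[n]} {x : E[n]} (h : HasDensity F x 0)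
    (hGF : G ⊆ F) : HasDensity G x 0 :=
  squeeze_zero (fun _ => by positivity)
    (fun r => by
      gcongr
      exact volume_inter_ball_ne_top F x r)
    h

theorem hasDensity_zero_of_mem_nhds {n : ℕ} {F : Set E[n]} {x : E[n]} (hF : Fᶜ ∈ nhds x) :
    HasDensity F x 0 := by
  have hempty : HasDensity (∅ : Set E[n]) x 0 := by simp [HasDensity]
  exact hempty.congr hF (by simp)

theorem essBoundary_inter_ball_subset {n : ℕ} (F : Set E[n]) (z : E[n]) (r : ℝ) :
    essBoundary (F ∩ ball z r) ⊆ (essBoundary F ∩ ball z r) ∪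
      ((densityOnePoints F ∩ sphere z r) ∪ (essBoundary F ∩ sphere z r)) := by
  rintro x ⟨h0, h1⟩
  have hF0 : ¬ HasDensity F x 0 := fun h => h0 (h.zero_mono Set.inter_subset_left)
  rcases lt_trichotomy (dist x z) r with hlt | heq | hgt
  · have hmem : ball z r ∈ nhds x := isOpen_ball.mem_nhds hlt
    exact Or.inl ⟨⟨hF0, fun h => h1 (h.congr hmem (by simp [Set.inter_assoc]))⟩, hlt⟩
  · by_cases hF1 : HasDensity F x 1
    · exact Or.inr (Or.inl ⟨hF1, heq⟩)
    · exact Or.inr (Or.inr ⟨⟨hF0, hF1⟩, heq⟩)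
  · refine absurd (hasDensity_zero_of_mem_nhds ?_) h0
    filter_upwards [isClosed_closedBall.isOpen_compl.mem_nhds (show x ∈ (closedBall z r)ᶜ by
      simpa using hgt)] with y hy hyF
    exact hy (ball_subset_closedBall hyF.2)

theorem ae_measure_sphere_eq_zero {X : Type*} [PseudoMetricSpace X] [MeasurableSpace X]
    [OpensMeasurableSpace X] (μ : Measure X) [SFinite μ] (z : X) :
    ∀ᵐ r : ℝ, μ (sphere z r) = 0 := by
  have hcount : {r : ℝ | 0 < μ (sphere z r)}.Countable :=
    Measure.countable_meas_pos_of_disjoint_iUnion (fun _ => isClosed_sphere.measurableSet)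
      fun r s hrs => Set.disjoint_left.2 fun x hr hs => hrs (hr.symm.trans hs)
  refine (hcount.ae_notMem volume).mono fun r hr => ?_
  simpa using hr

/-! ### Hausdorff measure on spheres -/

theorem measure_le_of_locally_le {X : Type*} [TopologicalSpace X] [SecondCountableTopology X]
    [MeasurableSpace X] [OpensMeasurableSpace X] {μ ν : Measure X}
    (h : ∀ x, ∃ U, IsOpen U ∧ x ∈ U ∧ ∀ S ⊆ U, MeasurableSet S → μ S ≤ ν S) : μ ≤ ν := by
  choose U hUo hxU hU using h
  obtain ⟨t, htc, htU⟩ := TopologicalSpace.countable_cover_nhds fun x => (hUo x).mem_nhds (hxU x)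
  rw [Measure.le_iff]
  intro S hS
  rcases t.eq_empty_or_nonempty with rfl | hne
  · have : S = ∅ := Set.subset_empty_iff.1 (by simpa [← htU] using Set.subset_univ S)
    simp [this]
  obtain ⟨x, rfl⟩ := htc.exists_eq_range hne
  rw [Set.biUnion_range] at htU
  have hmeas : ∀ n, MeasurableSet (S ∩ disjointed (fun n => U (x n)) n) := fun n =>
    hS.inter (MeasurableSet.disjointed (fun n => (hUo (x n)).measurableSet) n)
  have hdisj : Pairwise (Function.onFun Disjoint
      fun n => S ∩ disjointed (fun n => U (x n)) n) := fun m n hmn =>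
    (disjoint_disjointed _ hmn).mono Set.inter_subset_right Set.inter_subset_right
  have hSU : S = ⋃ n, S ∩ disjointed (fun n => U (x n)) n := by
    rw [← Set.inter_iUnion, iUnion_disjointed, htU, Set.inter_univ]
  rw [hSU, measure_iUnion hdisj hmeas, measure_iUnion hdisj hmeas]
  exact ENNReal.tsum_le_tsum fun n =>
    hU (x n) _ (Set.inter_subset_right.trans (disjointed_subset _ n)) (hmeas n)

section RadialProjection

variable {V : Type*} [NormedAddCommGroup V] [InnerProductSpace ℝ V] {e : V}

theorem norm_inv_norm_smul_sub_le {x y : V} (hx : 1 ≤ ‖x‖) (hy : 1 ≤ ‖y‖) :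
    ‖‖x‖⁻¹ • x - ‖y‖⁻¹ • y‖ ≤ ‖x - y‖ := by
  have hx0 : ‖x‖ ≠ 0 := by positivity
  have hy0 : ‖y‖ ≠ 0 := by positivity
  set s := inner ℝ x y / (‖x‖ * ‖y‖) with hs
  have hs1 : s ≤ 1 := (abs_le.1 (abs_real_inner_div_norm_mul_norm_le_one x y)).2
  have hinner : inner ℝ x y = ‖x‖ * ‖y‖ * s := by
    rw [hs]
    field_simp
  have hunit : inner ℝ (‖x‖⁻¹ • x) (‖y‖⁻¹ • y) = s := by
    rw [real_inner_smul_left, real_inner_smul_right, hinner]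
    field_simp
  refine le_of_sq_le_sq ?_ (norm_nonneg _)
  rw [norm_sub_sq_real, norm_sub_sq_real, hunit, hinner, norm_smul, norm_smul, norm_inv, norm_inv,
    norm_norm, norm_norm, inv_mul_cancel₀ hx0, inv_mul_cancel₀ hy0]
  have hxy : 1 ≤ ‖x‖ * ‖y‖ := one_le_mul_of_one_le_of_one_le hx hy
  nlinarith [sq_nonneg (‖x‖ - ‖y‖), mul_nonneg (sub_nonneg.2 hxy) (sub_nonneg.2 hs1)]

theorem one_le_norm_add_coe (he : ‖e‖ = 1) (y : (ℝ ∙ e)ᗮ) : 1 ≤ ‖e + (y : V)‖ := by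
  have h := norm_sq_smul_add_coe he 1 y
  rw [one_smul, one_pow] at h
  nlinarith [norm_nonneg (e + (y : V)), sq_nonneg ‖y‖]

/-- The radial projection, onto the unit sphere, of the hyperplane tangent to the sphere at `e`;
the hyperplane is parametrised by the orthogonal complement of `e`. -/
def radialProjection (e : V) (y : (ℝ ∙ e)ᗮ) : V := ‖e + (y : V)‖⁻¹ • (e + (y : V))

theorem lipschitzWith_radialProjection (he : ‖e‖ = 1) : LipschitzWith 1 (radialProjection e) :=
  LipschitzWith.mk_one fun y z => by
    rw [dist_eq_norm, dist_eq_norm]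
    refine (norm_inv_norm_smul_sub_le (one_le_norm_add_coe he y)
      (one_le_norm_add_coe he z)).trans_eq ?_
    rw [add_sub_add_left_eq_sub, ← Submodule.coe_sub, Submodule.coe_norm]

theorem inner_radialProjection (he : ‖e‖ = 1) (y : (ℝ ∙ e)ᗮ) :
    inner ℝ e (radialProjection e y) = ‖e + (y : V)‖⁻¹ := by
  have h := inner_smul_add_coe he 1 y
  rw [one_smul] at h
  rw [radialProjection, real_inner_smul_right, h, mul_one]

theorem exists_radialProjection_eq (he : ‖e‖ = 1) {x : V} (hx : ‖x‖ = 1)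
    (hpos : 0 < inner ℝ e x) : ∃ y, radialProjection e y = x := by
  refine ⟨(inner ℝ e x)⁻¹ • (ℝ ∙ e)ᗮ.orthogonalProjectionOnto x, ?_⟩
  have h : e + (((inner ℝ e x)⁻¹ • (ℝ ∙ e)ᗮ.orthogonalProjectionOnto x : (ℝ ∙ e)ᗮ) : V) =
      (inner ℝ e x)⁻¹ • x := by
    nth_rw 4 [← inner_smul_add_orthogonalProjectionOnto he x]
    rw [smul_add, smul_smul, inv_mul_cancel₀ hpos.ne', one_smul, Submodule.coe_smul]
  rw [radialProjection, h, norm_smul, hx, norm_inv, Real.norm_of_nonneg hpos.le, mul_one, inv_inv,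
    smul_smul, mul_inv_cancel₀ hpos.ne', one_smul]

open scoped Pointwise in
theorem smul_preimage_radialProjection_subset (he : ‖e‖ = 1) {c : ℝ} {S : Set V}
    (hcap : ∀ ω ∈ S, c ≤ inner ℝ e ω) {t : ℝ} (ht : t ∈ Set.Ioo 0 c) :
    t • (radialProjection e ⁻¹' S) ⊆
      {y : (ℝ ∙ e)ᗮ | t • e + (y : V) ∈ Set.Ioo (0 : ℝ) 1 • S} := by
  rintro _ ⟨y, hy, rfl⟩
  have hpos : 0 < ‖e + (y : V)‖ := one_pos.trans_le (one_le_norm_add_coe he y)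
  have hcy : c ≤ ‖e + (y : V)‖⁻¹ := inner_radialProjection he y ▸ hcap _ hy
  have ht1 : t * ‖e + (y : V)‖ < 1 := by
    rw [← lt_div_iff₀ hpos, one_div]
    exact ht.2.trans_le hcy
  refine Set.mem_smul.2 ⟨t * ‖e + (y : V)‖, ⟨mul_pos ht.1 hpos, ht1⟩, _, hy, ?_⟩
  simp [radialProjection, smul_smul, hpos.ne']

end RadialProjection

section SphereMeasure

open scoped Pointwise

variable {V : Type*} [NormedAddCommGroup V] [InnerProductSpace ℝ V] [FiniteDimensional ℝ V]
  [MeasurableSpace V] [BorelSpace V] {e : V} {k : ℕ}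

theorem lintegral_volume_slice_le (he : ‖e‖ = 1) (A : Set V) :
    ∫⁻ t : ℝ, volume {y : (ℝ ∙ e)ᗮ | t • e + (y : V) ∈ A} ≤ volume A := by
  have hmp := measurePreserving_smul_add_coe he
  have hB := measurableSet_toMeasurable volume A
  calc ∫⁻ t : ℝ, volume {y : (ℝ ∙ e)ᗮ | t • e + (y : V) ∈ A}
      ≤ ∫⁻ t : ℝ, volume {y : (ℝ ∙ e)ᗮ | t • e + (y : V) ∈ toMeasurable volume A} :=
        lintegral_mono fun t => measure_mono fun y hy => subset_toMeasurable volume A hy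
    _ = volume (toMeasurable volume A) := by
        rw [← hmp.measure_preimage hB.nullMeasurableSet, Measure.volume_eq_prod,
          Measure.prod_apply (hmp.measurable hB)]
        rfl
    _ = volume A := measure_toMeasurable A

theorem lintegral_Ioo_ofReal_pow (k : ℕ) {c : ℝ} (hc : 0 ≤ c) :
    ∫⁻ t in Set.Ioo 0 c, ENNReal.ofReal (t ^ k) = ENNReal.ofReal (c ^ (k + 1) / (k + 1)) := by
  rw [← ofReal_integral_eq_lintegral_ofReal, ← integral_Ioc_eq_integral_Ioo,
    ← intervalIntegral.integral_of_le hc, integral_pow]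
  · simp
  · exact (intervalIntegral.intervalIntegrable_pow k).1.mono_set Set.Ioo_subset_Ioc_self
  · filter_upwards [ae_restrict_mem measurableSet_Ioo] with t ht
    exact pow_nonneg ht.1.le k

theorem measure_le_volume_preimage_radialProjection (hk : Module.finrank ℝ V = k + 1)
    (he : ‖e‖ = 1) {S : Set V} (hS : ∀ ω ∈ S, ‖ω‖ = 1 ∧ 0 < inner ℝ e ω) :
    μHE[k] S ≤ volume (radialProjection e ⁻¹' S) := by
  have hW : Module.finrank ℝ (ℝ ∙ e)ᗮ = k := by
    have := finrank_orthogonal_span_singleton_add_one he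
    omega
  rw [← InnerProductSpace.euclideanHausdorffMeasure_eq_volume, hW]
  calc μHE[k] S ≤ μHE[k] (radialProjection e '' (radialProjection e ⁻¹' S)) := by
        refine measure_mono fun ω hω => ?_
        obtain ⟨y, rfl⟩ := exists_radialProjection_eq he (hS ω hω).1 (hS ω hω).2
        exact Set.mem_image_of_mem _ hω
    _ ≤ μHE[k] (radialProjection e ⁻¹' S) := by
        have h := euclideanHausdorffMeasure_image_le
          ((lipschitzWith_radialProjection he).lipschitzOnWith (s := radialProjection e ⁻¹' S)) k
        rwa [ENNReal.coe_one, one_pow, one_mul] at h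

theorem ofReal_pow_mul_measure_cap_le_toSphere (hk : Module.finrank ℝ V = k + 1) (he : ‖e‖ = 1)
    {c : ℝ} (hc : 0 < c) {S : Set (sphere (0 : V) 1)} (hS : MeasurableSet S)
    (hcap : ∀ ω ∈ S, c ≤ inner ℝ e (ω : V)) :
    ENNReal.ofReal (c ^ (k + 1)) * μHE[k] S ≤ (volume : Measure V).toSphere S := by
  have hW : Module.finrank ℝ (ℝ ∙ e)ᗮ = k := by
    have := finrank_orthogonal_span_singleton_add_one he
    omega
  have hcap' : ∀ ω ∈ Subtype.val '' S, c ≤ inner ℝ e ω := by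
    rintro _ ⟨ω, hω, rfl⟩
    exact hcap ω hω
  set G := radialProjection e ⁻¹' (Subtype.val '' S)
  have hSG : μHE[k] S ≤ volume G := by
    rw [← isometry_subtype_coe.euclideanHausdorffMeasure_image]
    refine measure_le_volume_preimage_radialProjection hk he fun ω hω =>
      ⟨?_, hc.trans_le (hcap' ω hω)⟩
    obtain ⟨ω, -, rfl⟩ := hω
    exact norm_eq_of_mem_sphere ω
  have hslice : ∫⁻ t in Set.Ioo 0 c, ENNReal.ofReal (t ^ k) * volume G ≤
      volume (Set.Ioo (0 : ℝ) 1 • (Subtype.val '' S) : Set V) := by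
    refine le_trans ?_ ((setLIntegral_le_lintegral (Set.Ioo 0 c) _).trans
      (lintegral_volume_slice_le he _))
    refine setLIntegral_mono' measurableSet_Ioo fun t ht => ?_
    have h := measure_mono (μ := volume) (smul_preimage_radialProjection_subset he hcap' ht)
    rwa [Measure.addHaar_smul_of_nonneg _ ht.1.le, hW] at h
  rw [Measure.toSphere_apply' _ hS, hk]
  calc ENNReal.ofReal (c ^ (k + 1)) * μHE[k] S
      ≤ ENNReal.ofReal (c ^ (k + 1)) * volume G := by gcongr
    _ = (k + 1 : ℕ) * ∫⁻ t in Set.Ioo 0 c, ENNReal.ofReal (t ^ k) * volume G := by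
        rw [lintegral_mul_const _ (by fun_prop), lintegral_Ioo_ofReal_pow k hc.le, ← mul_assoc,
          ← ENNReal.ofReal_natCast, ← ENNReal.ofReal_mul (by positivity)]
        congr 2
        push_cast
        field_simp
    _ ≤ _ := by gcongr

theorem euclideanHausdorffMeasure_le_toSphere (hk : Module.finrank ℝ V = k + 1) :
    (μHE[k] : Measure (sphere (0 : V) 1)) ≤ (volume : Measure V).toSphere := by
  have hcap : ∀ c ∈ Set.Ioo (0 : ℝ) 1,
      ENNReal.ofReal (c ^ (k + 1)) • (μHE[k] : Measure (sphere (0 : V) 1)) ≤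
        (volume : Measure V).toSphere := by
    rintro c ⟨hc0, hc1⟩
    refine measure_le_of_locally_le fun e => ⟨{ω | c < inner ℝ (e : V) ω}, ?_, ?_, ?_⟩
    · exact isOpen_lt continuous_const (by fun_prop)
    · rw [Set.mem_ofPred_eq, real_inner_self_eq_norm_sq, norm_eq_of_mem_sphere e]
      simpa using hc1
    · intro S hScap hS
      exact ofReal_pow_mul_measure_cap_le_toSphere hk (norm_eq_of_mem_sphere e) hc0 hS
        fun ω hω => (hScap hω).le
  rw [Measure.le_iff']
  intro S
  have hlim : Tendsto (fun c : ℝ => ENNReal.ofReal (c ^ (k + 1)) * μHE[k] S)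
      (nhdsWithin 1 (Set.Iio 1)) (nhds (ENNReal.ofReal (1 ^ (k + 1)) * μHE[k] S)) := by
    refine ENNReal.Tendsto.mul_const (ENNReal.tendsto_ofReal ?_) (by simp)
    exact ((continuous_pow (k + 1)).tendsto 1).mono_left nhdsWithin_le_nhds
  rw [one_pow, ENNReal.ofReal_one, one_mul] at hlim
  refine le_of_tendsto hlim ?_
  filter_upwards [Ioo_mem_nhdsLT one_pos] with c hc
  exact hcap c hc S

/-- The area of the slice of `A` by the sphere of radius `s` centred at the origin, measured through
polar coordinates. -/
def sphericalSliceArea (A : Set V) (s : ℝ) : ℝ≥0∞ :=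
  ENNReal.ofReal (s ^ (Module.finrank ℝ V - 1)) *
    (volume : Measure V).toSphere {ω | s • (ω : V) ∈ A}

theorem measure_inter_sphere_le_sphericalSliceArea (hk : Module.finrank ℝ V = k + 1) (A : Set V)
    {s : ℝ} (hs : 0 < s) : μHE[k] (A ∩ sphere 0 s) ≤ sphericalSliceArea A s := by
  have hslice : A ∩ sphere 0 s = s • (Subtype.val '' {ω : sphere (0 : V) 1 | s • (ω : V) ∈ A}) := by
    ext x
    rw [Set.mem_smul_set_iff_inv_smul_mem₀ hs.ne']
    simp [norm_smul, abs_of_pos hs, hs.ne', smul_smul, inv_mul_eq_one₀ hs.ne', eq_comm, and_comm]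
  rw [hslice, Measure.euclideanHausdorffMeasure_smul₀ k hs.ne',
    isometry_subtype_coe.euclideanHausdorffMeasure_image, sphericalSliceArea, hk,
    ENNReal.smul_def, smul_eq_mul, Nat.add_sub_cancel, ENNReal.coe_pow, ENNReal.ofReal_pow hs.le,
    ← enorm_eq_nnnorm, Real.enorm_of_nonneg hs.le]
  gcongr
  exact euclideanHausdorffMeasure_le_toSphere hk

theorem measurable_sphericalSliceArea {A : Set V} (hA : MeasurableSet A) :
    Measurable (sphericalSliceArea A) := by
  have hm : Measurable fun p : ℝ × sphere (0 : V) 1 => p.1 • (p.2 : V) := by fun_prop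
  have hpow : Measurable fun s : ℝ => ENNReal.ofReal (s ^ (Module.finrank ℝ V - 1)) := by fun_prop
  exact hpow.mul (measurable_measure_prodMk_left (hm hA))

theorem volume_eq_lintegral_sphericalSliceArea [Nontrivial V] {A : Set V} (hA : MeasurableSet A) :
    volume A = ∫⁻ s in Set.Ioi 0, sphericalSliceArea A s := by
  have hmp := (volume : Measure V).measurePreserving_homeomorphUnitSphereProd
  have hm : Measurable fun p : sphere (0 : V) 1 × Set.Ioi (0 : ℝ) => (p.2 : ℝ) • (p.1 : V) := by
    fun_prop
  calc volume A = volume (A ∩ {0}ᶜ) := (measure_inter_conull (by simp)).symm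
    _ = (volume.comap Subtype.val : Measure ({0}ᶜ : Set V)) (Subtype.val ⁻¹' A) := by
        rw [comap_subtype_coe_apply (measurableSet_singleton _).compl, Subtype.image_preimage_coe,
          Set.inter_comm]
    _ = ((volume : Measure V).toSphere.prod (.volumeIoiPow (Module.finrank ℝ V - 1)))
          ((fun p => (p.2 : ℝ) • (p.1 : V)) ⁻¹' A) := by
        rw [← hmp.measure_preimage (hm hA).nullMeasurableSet]
        congr 1
        ext x
        have hx : ‖(x : V)‖ ≠ 0 := norm_ne_zero_iff.2 x.2
        simp [smul_smul, hx]
    _ = ∫⁻ s : Set.Ioi (0 : ℝ), sphericalSliceArea A s ∂(volume.comap Subtype.val) := by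
        rw [Measure.prod_apply_symm (hm hA), Measure.volumeIoiPow,
          lintegral_withDensity_eq_lintegral_mul _ (by fun_prop)
            (measurable_measure_prodMk_right (hm hA))]
        rfl
    _ = ∫⁻ s in Set.Ioi 0, sphericalSliceArea A s :=
        lintegral_subtype_comap measurableSet_Ioi _

end SphereMeasure

/-! ### Polar slices and the growth of the truncated volume -/

section TruncatedVolume

variable {V : Type*} [NormedAddCommGroup V] [InnerProductSpace ℝ V] [FiniteDimensional ℝ V]
  [MeasurableSpace V] [BorelSpace V] {A : Set V}

theorem sphericalSliceArea_inter_ball (A : Set V) {s : ℝ} (hs : 0 < s) (r : ℝ) :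
    sphericalSliceArea (A ∩ ball 0 r) s = (Set.Iio r).indicator (sphericalSliceArea A) s := by
  have hnorm (ω : sphere (0 : V) 1) : ‖s • (ω : V)‖ = s := by
    rw [norm_smul, norm_eq_of_mem_sphere, mul_one, Real.norm_of_nonneg hs.le]
  by_cases hsr : s < r <;> simp [sphericalSliceArea, hnorm, hsr]

theorem volume_inter_ball_eq_lintegral [Nontrivial V] (hA : MeasurableSet A) (r : ℝ) :
    volume (A ∩ ball 0 r) = ∫⁻ s in Set.Ioo 0 r, sphericalSliceArea A s := by
  rw [volume_eq_lintegral_sphericalSliceArea (hA.inter measurableSet_ball),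
    setLIntegral_congr_fun measurableSet_Ioi fun s hs => sphericalSliceArea_inter_ball A hs r,
    setLIntegral_indicator measurableSet_Iio, Set.inter_comm, Set.Ioi_inter_Iio]

theorem ae_ae_toSphere_smul [Nontrivial V] {p : V → Prop} (h : ∀ᵐ x, p x) :
    ∀ᵐ s : ℝ, 0 < s → ∀ᵐ ω : sphere (0 : V) 1 ∂(volume : Measure V).toSphere, p (s • (ω : V)) := by
  set N := toMeasurable volume {x | ¬ p x}
  have hNmeas : MeasurableSet N := measurableSet_toMeasurable _ _
  have hN0 : ∫⁻ s in Set.Ioi 0, sphericalSliceArea N s = 0 := by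
    rw [← volume_eq_lintegral_sphericalSliceArea hNmeas, measure_toMeasurable]
    exact h
  rw [lintegral_eq_zero_iff (measurable_sphericalSliceArea hNmeas), EventuallyEq,
    ae_restrict_iff' measurableSet_Ioi] at hN0
  filter_upwards [hN0] with s hs hs0
  rcases mul_eq_zero.1 (hs hs0) with hpow | hslice
  · exact absurd (ENNReal.ofReal_eq_zero.1 hpow) (pow_pos hs0 _).not_ge
  · refine measure_mono_null (fun ω hω => ?_) hslice
    exact subset_toMeasurable volume {x | ¬ p x} hω

theorem ae_sphericalSliceArea_congr [Nontrivial V] {B : Set V} (h : A =ᵐ[volume] B) :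
    ∀ᵐ s : ℝ, 0 < s → sphericalSliceArea A s = sphericalSliceArea B s := by
  filter_upwards [ae_ae_toSphere_smul h.mem_iff] with s hs hs0
  rw [sphericalSliceArea, sphericalSliceArea]
  congr 1
  exact measure_congr ((hs hs0).mono fun ω hω => propext hω)

theorem sphericalSliceArea_lt_top (A : Set V) (s : ℝ) : sphericalSliceArea A s < ⊤ :=
  ENNReal.mul_lt_top ENNReal.ofReal_lt_top (measure_lt_top _ _)

theorem locallyIntegrable_toReal_sphericalSliceArea (hA : MeasurableSet A) :
    LocallyIntegrable fun s => (sphericalSliceArea A s).toReal := by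
  have hbound : Continuous fun s : ℝ => |s ^ (Module.finrank ℝ V - 1)| *
      (volume : Measure V).toSphere.real Set.univ := by fun_prop
  refine hbound.locallyIntegrable.mono
    (measurable_sphericalSliceArea hA).ennreal_toReal.aestronglyMeasurable (.of_forall fun s => ?_)
  rw [Real.norm_of_nonneg ENNReal.toReal_nonneg, Real.norm_of_nonneg (by positivity),
    sphericalSliceArea, ENNReal.toReal_mul, ENNReal.toReal_ofReal']
  gcongr
  · exact max_le (le_abs_self _) (abs_nonneg _)
  · exact measureReal_mono (Set.subset_univ _)

theorem monotone_measureReal_inter_ball (A : Set V) :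
    Monotone fun r => (volume : Measure V).real (A ∩ ball 0 r) := fun _ _ hrs =>
  measureReal_mono (Set.inter_subset_inter_right A (ball_subset_ball hrs))
    (measure_inter_lt_top_of_right_ne_top measure_ball_lt_top.ne).ne

theorem ae_deriv_measureReal_inter_ball [Nontrivial V] (hA : MeasurableSet A) :
    ∀ᵐ r : ℝ, 0 < r → deriv (fun r => (volume : Measure V).real (A ∩ ball 0 r)) r =
      (sphericalSliceArea A r).toReal := by
  have hint (r : ℝ) (hr : 0 < r) : volume.real (A ∩ ball 0 r) =
      ∫ s in (0 : ℝ)..r, (sphericalSliceArea A s).toReal := by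
    rw [intervalIntegral.integral_of_le hr.le, integral_Ioc_eq_integral_Ioo,
      integral_toReal (measurable_sphericalSliceArea hA).aemeasurable
        (.of_forall (sphericalSliceArea_lt_top A)), ← volume_inter_ball_eq_lintegral hA]
    rfl
  filter_upwards [LocallyIntegrable.ae_hasDerivAt_integral
      (locallyIntegrable_toReal_sphericalSliceArea hA)]
    with r hr hr0
  have heq : (fun r => (volume : Measure V).real (A ∩ ball 0 r)) =ᶠ[nhds r]
      fun r => ∫ s in (0 : ℝ)..r, (sphericalSliceArea A s).toReal := by
    filter_upwards [Ioi_mem_nhds hr0] with s hs using hint s hs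
  rw [heq.deriv_eq, (hr 0).deriv]

end TruncatedVolume

theorem ae_measure_densityOnePoints_inter_sphere_le {k : ℕ} {F : Set E[k + 1]}
    (hF : MeasurableSet F) :
    ∀ᵐ r : ℝ, 0 < r → μHE[k] (densityOnePoints F ∩ sphere 0 r) ≤
      ENNReal.ofReal (deriv (fun r => volume.real (F ∩ ball 0 r)) r) := by
  filter_upwards [ae_deriv_measureReal_inter_ball hF,
    ae_sphericalSliceArea_congr (eventuallyEq_set.2 (ae_mem_densityOnePoints_iff hF))]
    with r hderiv hcongr hr
  rw [hderiv hr, ENNReal.ofReal_toReal (sphericalSliceArea_lt_top F r).ne, ← hcongr hr]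
  exact measure_inter_sphere_le_sphericalSliceArea finrank_euclideanSpace_fin _ hr

/-! ### Choosing the radius -/

theorem mul_sub_lt_of_ae_lt_deriv {φ : ℝ → ℝ} {a b w : ℝ} (hab : a < b)
    (hφ : MonotoneOn φ (Set.Icc a b)) (hder : ∀ᵐ r, r ∈ Set.Ioo a b → w < deriv φ r) :
    w * (b - a) < φ b - φ a := by
  rw [← Set.uIcc_of_le hab.le] at hφ
  rw [← ae_restrict_iff' measurableSet_Ioo, Measure.restrict_congr_set Ioo_ae_eq_Ioc] at hder
  have hint : ∫ _ in a..b, w < ∫ r in a..b, deriv φ r := by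
    refine intervalIntegral.integral_lt_integral_of_ae_le_of_measure_setOfPred_lt_ne_zero hab.le
      (by simp) hφ.intervalIntegrable_deriv (hder.mono fun r h => h.le) ?_
    rw [measure_congr (eventuallyEq_univ.2 hder)]
    simpa using hab
  have hmem := hφ.intervalIntegral_deriv_mem_uIcc
  rw [Set.uIcc_of_le (sub_nonneg.2 (hφ Set.left_mem_uIcc Set.right_mem_uIcc hab.le))] at hmem
  calc w * (b - a) = ∫ _ in a..b, w := by
        rw [intervalIntegral.integral_const, smul_eq_mul, mul_comm]
    _ < ∫ r in a..b, deriv φ r := hint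
    _ ≤ φ b - φ a := hmem.2

theorem mul_pow_lt_of_ae_lt_deriv {n : ℕ} (hn : n ≠ 0) {m : ℝ → ℝ} (hm : Monotone m)
    {a b w : ℝ} (hab : a < b) (ha : 0 ≤ m a) (hpos : ∀ r ∈ Set.Ioo a b, 0 < m r) (hw : 0 ≤ w)
    (hder : ∀ᵐ r, r ∈ Set.Ioo a b → n * w * m r ^ (1 - (n : ℝ)⁻¹) < deriv m r) :
    (w * (b - a)) ^ n < m b := by
  have : (0 : ℝ) < n := by positivity
  set φ : ℝ → ℝ := fun r => m r ^ (n⁻¹ : ℝ)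
  have hφ : MonotoneOn φ (Set.Icc a b) := fun r hr s _ hrs =>
    Real.rpow_le_rpow (ha.trans (hm hr.1)) (hm hrs) (by positivity)
  have hφder : ∀ᵐ r, r ∈ Set.Ioo a b → w < deriv φ r := by
    filter_upwards [hder, hm.ae_differentiableAt] with r hr hdiff hrab
    have hmr := hpos r hrab
    have hderiv := (hdiff.hasDerivAt.rpow_const (p := (n⁻¹ : ℝ)) (Or.inl hmr.ne')).deriv
    calc w = n * w * m r ^ (1 - (n : ℝ)⁻¹) * ((n : ℝ)⁻¹ * m r ^ ((n : ℝ)⁻¹ - 1)) := by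
          rw [← neg_sub (1 : ℝ) (n : ℝ)⁻¹, Real.rpow_neg hmr.le]
          field_simp
      _ < deriv m r * ((n : ℝ)⁻¹ * m r ^ ((n : ℝ)⁻¹ - 1)) := by
          gcongr
          exact hr hrab
      _ = deriv φ r := by rw [hderiv, mul_assoc]
  have hφa : 0 ≤ φ a := by positivity
  have hφb : w * (b - a) < φ b := by linarith [mul_sub_lt_of_ae_lt_deriv hab hφ hφder]
  calc (w * (b - a)) ^ n < φ b ^ n :=
        pow_lt_pow_left₀ hφb (mul_nonneg hw (sub_nonneg.2 hab.le)) hn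
    _ = m b := Real.rpow_inv_natCast_pow (ha.trans (hm hab.le)) hn

theorem isoperimetricProfile_ofReal (n : ℕ) {v : ℝ} (hv : 0 ≤ v) :
    isoperimetricProfile n (ENNReal.ofReal v) = ENNReal.ofReal
      (n * volume.real (ball (0 : E[n]) 1) ^ (n⁻¹ : ℝ) * v ^ (1 - (n : ℝ)⁻¹)) := by
  rw [isoperimetricProfile, ENNReal.ofReal_mul (by positivity), ENNReal.ofReal_mul (by positivity),
    ENNReal.ofReal_natCast, ← ENNReal.ofReal_rpow_of_nonneg hv (one_sub_natCast_inv_nonneg n),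
    ← ENNReal.ofReal_rpow_of_nonneg measureReal_nonneg (by positivity),
    ofReal_measureReal measure_ball_lt_top.ne]

section ChoosingRadius

variable {k : ℕ} {F : Set E[k + 1]}

theorem isoperimetricProfile_volume_inter_ball_le (hF : MeasurableSet F) {z : E[k + 1]} {r : ℝ}
    (hpos : volume (F ∩ ball z r) ≠ 0) (hsphere : μHE[k] (essBoundary F ∩ sphere z r) = 0) :
    isoperimetricProfile (k + 1) (volume (F ∩ ball z r)) ≤
      μHE[k] (essBoundary F ∩ ball z r) + μHE[k] (densityOnePoints F ∩ sphere z r) := by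
  calc _ ≤ μHE[k] (essBoundary (F ∩ ball z r)) :=
        isoperimetricProfile_volume_le (hF.inter measurableSet_ball)
          (volume_inter_ball_ne_top F z r) hpos
    _ ≤ μHE[k] (essBoundary F ∩ ball z r) + (μHE[k] (densityOnePoints F ∩ sphere z r) +
          μHE[k] (essBoundary F ∩ sphere z r)) :=
        (measure_mono (essBoundary_inter_ball_subset F z r)).trans
          ((measure_union_le _ _).trans (by gcongr; exact measure_union_le _ _))
    _ = _ := by rw [hsphere, add_zero]

theorem ae_measure_inter_sphere_eq_zero {X : Type*} [PseudoMetricSpace X] [MeasurableSpace X]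
    [OpensMeasurableSpace X] {μ : Measure X} {A : Set X} {z : X} {b : ℝ}
    (hfin : ∀ r < b, μ (A ∩ ball z r) ≠ ⊤) : ∀ᵐ r : ℝ, r < b → μ (A ∩ sphere z r) = 0 := by
  obtain ⟨u, -, hub, hu⟩ := exists_seq_strictMono_tendsto b
  have hnull (j : ℕ) : ∀ᵐ r : ℝ, μ.restrict (A ∩ ball z (u j)) (sphere z r) = 0 := by
    have : IsFiniteMeasure (μ.restrict (A ∩ ball z (u j))) :=
      isFiniteMeasure_restrict.2 (hfin _ (hub j))
    exact ae_measure_sphere_eq_zero _ z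
  filter_upwards [ae_all_iff.2 hnull] with r hr hrb
  obtain ⟨j, hj⟩ := (hu.eventually_const_lt hrb).exists
  rw [← hr j, Measure.restrict_apply isClosed_sphere.measurableSet]
  congr 1
  ext x
  simp only [Set.mem_inter_iff, mem_sphere, mem_ball]
  grind

theorem volume_inter_ball_ne_zero_of_hasDensity_one {x z : E[k + 1]} {r : ℝ}
    (hx : HasDensity F x 1) (hxr : x ∈ ball z r) : volume (F ∩ ball z r) ≠ 0 := by
  intro hnull
  refine HasDensity.not_hasDensity_one (F := F ∩ ball z r) (x := x) ?_
    (hx.congr (isOpen_ball.mem_nhds hxr) (by simp [Set.inter_assoc]))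
  simp only [HasDensity, measure_mono_null Set.inter_subset_left hnull, ENNReal.toReal_zero,
    zero_div, tendsto_const_nhds_iff]

end ChoosingRadius

section LargeSlices

variable {k : ℕ} {F : Set E[k + 1]} {a b : ℝ}

theorem measureReal_inter_ball_pos_of_lt
    (hlt : ∀ r ∈ Set.Ioo a b, μHE[k] (essBoundary F ∩ ball 0 r) <
      μHE[k] (densityOnePoints F ∩ sphere 0 r)) {r : ℝ} (hr : r ∈ Set.Ioo a b) :
    0 < volume.real (F ∩ ball 0 r) := by
  obtain ⟨s, has, hsr⟩ := exists_between hr.1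
  obtain ⟨x, hx, hxs⟩ :=
    nonempty_of_measure_ne_zero (pos_of_gt (hlt s ⟨has, hsr.trans hr.2⟩)).ne'
  have hxr : x ∈ ball 0 r := mem_ball.2 ((mem_sphere.1 hxs).trans_lt hsr)
  exact ENNReal.toReal_pos (volume_inter_ball_ne_zero_of_hasDensity_one hx hxr)
    (volume_inter_ball_ne_top F 0 r)

theorem measure_essBoundary_inter_ball_ne_top_of_lt (hab : a < b)
    (hlt : ∀ r ∈ Set.Ioo a b, μHE[k] (essBoundary F ∩ ball 0 r) <
      μHE[k] (densityOnePoints F ∩ sphere 0 r)) {r : ℝ} (hr : r < b) :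
    μHE[k] (essBoundary F ∩ ball 0 r) ≠ ⊤ := by
  obtain ⟨s, hrs, hsb⟩ := exists_between (max_lt hab hr)
  have hs := hlt s ⟨(le_max_left _ _).trans_lt hrs, hsb⟩
  exact measure_ne_top_of_subset (Set.inter_subset_inter_right _
    (ball_subset_ball ((le_max_right _ _).trans hrs.le))) hs.ne_top

theorem ae_lt_deriv_measureReal_inter_ball (hF : MeasurableSet F) (ha : 0 ≤ a) (hab : a < b)
    (hlt : ∀ r ∈ Set.Ioo a b, μHE[k] (essBoundary F ∩ ball 0 r) <
      μHE[k] (densityOnePoints F ∩ sphere 0 r)) :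
    ∀ᵐ r : ℝ, r ∈ Set.Ioo a b →
      (k + 1 : ℕ) * (volume.real (ball (0 : E[k + 1]) 1) ^ ((k + 1 : ℕ)⁻¹ : ℝ) / 2) *
        volume.real (F ∩ ball 0 r) ^ (1 - ((k + 1 : ℕ) : ℝ)⁻¹) <
      deriv (fun r => volume.real (F ∩ ball 0 r)) r := by
  filter_upwards [ae_measure_densityOnePoints_inter_sphere_le hF,
    ae_measure_inter_sphere_eq_zero
      fun r => measure_essBoundary_inter_ball_ne_top_of_lt hab hlt (r := r)]
    with r hslice hsphere hr
  have hvol : volume (F ∩ ball 0 r) = ENNReal.ofReal (volume.real (F ∩ ball 0 r)) :=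
    (ofReal_measureReal (volume_inter_ball_ne_top F 0 r)).symm
  have hpos : volume (F ∩ ball 0 r) ≠ 0 := fun h =>
    (measureReal_inter_ball_pos_of_lt hlt hr).ne' (by rw [measureReal_def, h, toReal_zero])
  have hslice := hslice (ha.trans_lt hr.1)
  have hiso : isoperimetricProfile (k + 1) (volume (F ∩ ball 0 r)) <
      ENNReal.ofReal (2 * deriv (fun r => volume.real (F ∩ ball 0 r)) r) := by
    calc _ ≤ μHE[k] (essBoundary F ∩ ball 0 r) + μHE[k] (densityOnePoints F ∩ sphere 0 r) :=
          isoperimetricProfile_volume_inter_ball_le hF hpos (hsphere hr.2)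
      _ < μHE[k] (densityOnePoints F ∩ sphere 0 r) + μHE[k] (densityOnePoints F ∩ sphere 0 r) :=
          ENNReal.add_lt_add_right (ne_top_of_le_ne_top ofReal_ne_top hslice) (hlt r hr)
      _ = 2 * μHE[k] (densityOnePoints F ∩ sphere 0 r) := (two_mul _).symm
      _ ≤ _ := by
          rw [ENNReal.ofReal_mul zero_le_two, ofReal_ofNat]
          gcongr
  rw [hvol, isoperimetricProfile_ofReal _ measureReal_nonneg] at hiso
  linarith [(ENNReal.ofReal_lt_ofReal_iff_of_nonneg (by positivity)).1 hiso]

theorem volume_ball_mul_lt_of_lt (hF : MeasurableSet F) (ha : 0 ≤ a) (hab : a < b)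
    (hlt : ∀ r ∈ Set.Ioo a b, μHE[k] (essBoundary F ∩ ball 0 r) <
      μHE[k] (densityOnePoints F ∩ sphere 0 r)) :
    volume (ball (0 : E[k + 1]) 1) * ENNReal.ofReal (((b - a) / 2) ^ (k + 1)) <
      volume (F ∩ ball 0 b) := by
  have hgrowth := mul_pow_lt_of_ae_lt_deriv k.succ_ne_zero (monotone_measureReal_inter_ball F) hab
    measureReal_nonneg (fun r => measureReal_inter_ball_pos_of_lt hlt) (by positivity)
    (ae_lt_deriv_measureReal_inter_ball hF ha hab hlt)
  rw [div_mul_eq_mul_div, mul_div_assoc, mul_pow,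
    Real.rpow_inv_natCast_pow measureReal_nonneg k.succ_ne_zero] at hgrowth
  rw [← ofReal_measureReal (volume_inter_ball_ne_top F 0 b),
    ← ofReal_measureReal (measure_ball_lt_top (μ := volume) (x := (0 : E[k + 1])) (r := 1)).ne,
    ← ENNReal.ofReal_mul measureReal_nonneg]
  exact (ENNReal.ofReal_lt_ofReal_iff_of_nonneg
    (mul_nonneg measureReal_nonneg (pow_nonneg (by linarith) _))).2 hgrowth

theorem exists_measure_densityOnePoints_inter_sphere_le (hF : MeasurableSet F) (ha : 0 ≤ a)
    (hab : a < b) (hvol : volume (F ∩ ball 0 b) ≤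
      volume (ball (0 : E[k + 1]) 1) * ENNReal.ofReal (((b - a) / 2) ^ (k + 1))) :
    ∃ r ∈ Set.Ioo a b, μHE[k] (densityOnePoints F ∩ sphere 0 r) ≤
      μHE[k] (essBoundary F ∩ ball 0 r) := by
  contrapose! hvol
  exact volume_ball_mul_lt_of_lt hF ha hab hvol

end LargeSlices

theorem euclideanHausdorffMeasure_le_iff {X : Type*} [EMetricSpace X] [MeasurableSpace X]
    [BorelSpace X] {k : ℕ} {A B : Set X} : μHE[k] A ≤ μHE[k] B ↔ μH[k] A ≤ μH[k] B := by
  simp only [Measure.euclideanHausdorffMeasure_def, ENNReal.smul_def, Measure.smul_apply,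
    smul_eq_mul]
  exact ENNReal.mul_le_mul_iff_right
    (by simpa using Measure.addHaarScalarFactor_volume_hausdorffMeasure_ne_zero k)
    ENNReal.coe_ne_top

theorem statement11_general (n : ℕ) (hn : 1 ≤ n) (F : Set (EuclideanSpace ℝ (Fin n)))
    (hF : MeasurableSet F) (r₀ ε : ℝ) (hε : 0 < ε)
    (hvol : volume (F ∩ ball 0 r₀) ≤ volume (unitBall n) * ENNReal.ofReal ((ε / 2) ^ n)) :
    ∃ r ∈ Set.Ioo (r₀ - ε) r₀,
      μH[(n : ℝ) - 1] (densityOnePoints F ∩ sphere (0 : EuclideanSpace ℝ (Fin n)) r) ≤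
        μH[(n : ℝ) - 1] (essBoundary F ∩ ball (0 : EuclideanSpace ℝ (Fin n)) r) := by
  rcases lt_or_ge (r₀ - ε) 0 with hneg | hnonneg
  · obtain ⟨r, hr, hlt⟩ := exists_between (lt_min (sub_lt_self r₀ hε) hneg)
    refine ⟨r, ⟨hr, hlt.trans_le (min_le_left _ _)⟩, ?_⟩
    simp [sphere_eq_empty_of_neg (hlt.trans_le (min_le_right _ _))]
  obtain ⟨k, rfl⟩ := Nat.exists_eq_add_of_le' hn
  have hdim : ((k + 1 : ℕ) : ℝ) - 1 = k := by push_cast; ring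
  simp only [hdim, ← euclideanHausdorffMeasure_le_iff]
  exact exists_measure_densityOnePoints_inter_sphere_le hF hnonneg (sub_lt_self r₀ hε)
    (by rwa [_root_.sub_sub_cancel])

/-- If `F` has finite perimeter and `|F| ≤ |B| (ε/2)ⁿ`, then there is `r ∈ (r₀ - ε, r₀)`
with `H^{n-1}(∂*F ∩ B_r) ≥ H^{n-1}(F¹ ∩ ∂B_r)`. -/
theorem statement11 (n : ℕ) (hn : 1 ≤ n) (F : Set (EuclideanSpace ℝ (Fin n)))
    (hF : MeasurableSet F) (hper : perimeter F < ⊤)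
    (r₀ ε : ℝ) (hr₀ : 0 < r₀) (hε : 0 < ε)
    (hvol : volume F ≤ volume (unitBall n) * ENNReal.ofReal ((ε / 2) ^ n)) :
    ∃ r ∈ Set.Ioo (r₀ - ε) r₀,
      μH[(n : ℝ) - 1]
          (densityOnePoints F ∩ Metric.sphere (0 : EuclideanSpace ℝ (Fin n)) r)
        ≤ μH[(n : ℝ) - 1]
          (essBoundary F ∩ Metric.ball (0 : EuclideanSpace ℝ (Fin n)) r) :=
  statement11_general n hn F hF r₀ ε hε ((measure_mono Set.inter_subset_left).trans hvol)
end
end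

section
/- Let n ≥ 1 be an integer and α ∈ (1,n). There exists a constant C = C(n,α) > 0 such that for every measurable set E ⊆ ℝⁿ with |E| = |B|, the Riesz potential Φ_E^α(x) := ∫_E |x−y|^{α−n} dy is continuously differentiable on ℝⁿ and satisfies sup_{x∈ℝⁿ} (|Φ_E^α(x)| + |∇Φ_E^α(x)|) ≤ C. -/
open MeasureTheory Metric Filter ENNReal

noncomputable section

/-- The Riesz potential `Φ_E^α(x) = ∫_E |x - y|^(α-n) dy`. -/
def rieszPotential {n : ℕ} (α : ℝ) (E : Set (EuclideanSpace ℝ (Fin n)))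
    (x : EuclideanSpace ℝ (Fin n)) : ℝ :=
  ∫ y in E, ‖x - y‖ ^ (α - (n : ℝ))

/-
The kernel `‖z‖ ^ p` is singular at the origin, so it is regularised to `(‖z‖ ^ 2 + ε) ^ (p / 2)`,
which is smooth with bounded derivative; its potential can be differentiated under the integral.
The error in the gradient kernel is `O(ε ^ s * ‖z‖ ^ (p - 1 - 2 * s))`. For `p - 1 > -dim V` a small
`s > 0` keeps the last exponent above `-dim V`, so the potential of `‖z‖ ^ (p - 1 - 2 * s)` is
bounded uniformly in the base point: split the integral at `‖x - y‖ = 1`, bounding the near part by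
the integral over a unit ball and the far part by the total mass. Hence the regularised gradients
converge uniformly as `ε → 0`, and the limit is the continuous gradient of the original potential.
-/

section Scalar

variable {q s t u ε : ℝ}

lemma one_add_mul_le_one_add_rpow_of_nonpos (ht : 0 ≤ t) (hq : q ≤ 0) :
    1 + q * t ≤ (1 + t) ^ q := by
  have hlog : Real.log (1 + t) ≤ t := by
    linarith [Real.log_le_sub_one_of_pos (show 0 < 1 + t by linarith)]
  calc 1 + q * t ≤ Real.log (1 + t) * q + 1 := by
        linarith [mul_le_mul_of_nonpos_right hlog hq]
    _ ≤ Real.exp (Real.log (1 + t) * q) := Real.add_one_le_exp _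
    _ = (1 + t) ^ q := (Real.rpow_def_of_pos (by linarith) q).symm

lemma one_sub_one_add_rpow_le (ht : 0 ≤ t) (hq : q ≤ 0) (hs : 0 ≤ s) (hs1 : s ≤ 1) :
    1 - (1 + t) ^ q ≤ (1 - q) * t ^ s := by
  rcases le_total t 1 with ht1 | ht1
  · calc 1 - (1 + t) ^ q ≤ (1 - q) * t := by
          linarith [one_add_mul_le_one_add_rpow_of_nonpos ht hq]
      _ ≤ (1 - q) * t ^ s :=
          mul_le_mul_of_nonneg_left (Real.self_le_rpow_of_le_one ht ht1 hs1) (by linarith)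
  · calc 1 - (1 + t) ^ q ≤ 1 := sub_le_self _ (by positivity)
      _ ≤ (1 - q) * t ^ s :=
          one_le_mul_of_one_le_of_one_le (by linarith) (Real.one_le_rpow ht1 hs)

lemma abs_add_rpow_sub_rpow_le (hu : 0 < u) (hε : 0 ≤ ε) (hq : q ≤ 0) (hs : 0 ≤ s)
    (hs1 : s ≤ 1) : |(u + ε) ^ q - u ^ q| ≤ (1 - q) * ε ^ s * u ^ (q - s) := by
  have hle : (u + ε) ^ q ≤ u ^ q := Real.rpow_le_rpow_of_nonpos hu (by linarith) hq
  have hfactor : (u + ε) ^ q = u ^ q * (1 + ε / u) ^ q := by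
    rw [← Real.mul_rpow hu.le (by positivity), mul_add, mul_one, mul_div_cancel₀ _ hu.ne']
  calc |(u + ε) ^ q - u ^ q| = u ^ q * (1 - (1 + ε / u) ^ q) := by
        rw [abs_sub_comm, abs_of_nonneg (sub_nonneg.2 hle), hfactor]
        ring
    _ ≤ u ^ q * ((1 - q) * (ε / u) ^ s) := by
        gcongr
        exact one_sub_one_add_rpow_le (by positivity) hq hs hs1
    _ = (1 - q) * ε ^ s * u ^ (q - s) := by
        rw [Real.div_rpow hε hu.le, Real.rpow_sub hu]
        ring

lemma rpow_le_rpow_add_one_of_nonpos (hsq : s ≤ q) (hq : q ≤ 0) (hu : 0 ≤ u) :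
    u ^ q ≤ u ^ s + 1 := by
  rcases hu.eq_or_lt with rfl | hu
  · linarith [Real.zero_rpow_le_one q, Real.rpow_nonneg le_rfl s]
  rcases le_total u 1 with h | h
  · linarith [Real.rpow_le_rpow_of_exponent_ge hu h hsq]
  · linarith [Real.rpow_le_one_of_one_le_of_nonpos h hq, Real.rpow_nonneg hu.le s]

end Scalar

section Kernel

variable {V : Type*} [NormedAddCommGroup V] {p s ε : ℝ}

/-- The Riesz kernel `‖z‖ ^ p` with its singularity smoothed at scale `√ε`; `ε = 0` gives back the
Riesz kernel itself. -/
def softRieszKernel (p ε : ℝ) (z : V) : ℝ := (‖z‖ ^ 2 + ε) ^ (p / 2)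

lemma sq_norm_rpow_div_two (p : ℝ) (z : V) : (‖z‖ ^ 2) ^ (p / 2) = ‖z‖ ^ p := by
  rw [← Real.rpow_natCast_mul (norm_nonneg z)]
  congr 1
  push_cast
  ring

lemma softRieszKernel_zero (p : ℝ) (z : V) : softRieszKernel p 0 z = ‖z‖ ^ p := by
  rw [softRieszKernel, add_zero, sq_norm_rpow_div_two]

lemma softRieszKernel_nonneg (hε : 0 ≤ ε) (z : V) : 0 ≤ softRieszKernel p ε z := by
  unfold softRieszKernel
  positivity

lemma softRieszKernel_le_rpow (hp : p ≤ 0) (hε : 0 < ε) (z : V) :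
    softRieszKernel p ε z ≤ ε ^ (p / 2) :=
  Real.rpow_le_rpow_of_nonpos hε (le_add_of_nonneg_left (by positivity)) (by linarith)

lemma softRieszKernel_le_norm_rpow (hp : p ≤ 0) (hε : 0 ≤ ε) {z : V} (hz : z ≠ 0) :
    softRieszKernel p ε z ≤ ‖z‖ ^ p := by
  rw [← sq_norm_rpow_div_two]
  exact Real.rpow_le_rpow_of_nonpos (by positivity) (le_add_of_nonneg_right hε) (by linarith)

lemma abs_softRieszKernel_sub_norm_rpow_le (hp : p ≤ 0) (hs : 0 ≤ s) (hs1 : s ≤ 1) (hε : 0 ≤ ε)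
    {z : V} (hz : z ≠ 0) :
    |softRieszKernel p ε z - ‖z‖ ^ p| ≤ (1 - p / 2) * ε ^ s * ‖z‖ ^ (p - 2 * s) := by
  have h := abs_add_rpow_sub_rpow_le (u := ‖z‖ ^ 2) (q := p / 2) (by positivity) hε
    (by linarith) hs hs1
  rwa [show p / 2 - s = (p - 2 * s) / 2 by ring, sq_norm_rpow_div_two, sq_norm_rpow_div_two] at h

lemma tendsto_softRieszKernel (p : ℝ) {z : V} (hz : z ≠ 0) :
    Tendsto (fun ε ↦ softRieszKernel p ε z) (nhds 0) (nhds (‖z‖ ^ p)) := by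
  rw [← softRieszKernel_zero]
  exact ((continuous_const.add continuous_id).continuousAt).rpow_const
    (Or.inl (by simpa using hz))

lemma continuous_softRieszKernel (p : ℝ) (hε : 0 < ε) :
    Continuous (softRieszKernel p ε : V → ℝ) :=
  Continuous.rpow_const (by fun_prop) fun _ ↦ Or.inl (by positivity)

variable [InnerProductSpace ℝ V]

/-- The derivative of `softRieszKernel p ε`. For `ε = 0` it is the derivative
`p ‖z‖ ^ (p - 2) ⟪z, ·⟫` of the Riesz kernel away from the origin, extended by `0`. -/
def softRieszKernelFDeriv (p ε : ℝ) (z : V) : V →L[ℝ] ℝ :=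
  (p * softRieszKernel (p - 2) ε z) • innerSL ℝ z

lemma continuous_softRieszKernelFDeriv (p : ℝ) (hε : 0 < ε) :
    Continuous (softRieszKernelFDeriv p ε : V → V →L[ℝ] ℝ) :=
  (continuous_const.mul (continuous_softRieszKernel (p - 2) hε)).smul (innerSL ℝ).continuous

lemma hasFDerivAt_softRieszKernel (p : ℝ) (hε : 0 < ε) (z : V) :
    HasFDerivAt (softRieszKernel p ε) (softRieszKernelFDeriv p ε z) z := by
  have hbase : HasFDerivAt (fun z : V ↦ ‖z‖ ^ 2 + ε) (2 • innerSL ℝ z) z := by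
    simpa using (hasFDerivAt_id (𝕜 := ℝ) z).norm_sq.add_const ε
  have hscalar : softRieszKernelFDeriv p ε z =
      (p / 2 * (‖z‖ ^ 2 + ε) ^ (p / 2 - 1)) • 2 • innerSL ℝ z := by
    rw [softRieszKernelFDeriv, softRieszKernel, show (p - 2) / 2 = p / 2 - 1 by ring]
    module
  rw [hscalar]
  exact hbase.rpow_const (Or.inl (by positivity))

lemma norm_softRieszKernelFDeriv_le (p : ℝ) (hε : 0 ≤ ε) (z : V) :
    ‖softRieszKernelFDeriv p ε z‖ ≤ |p| * softRieszKernel (p - 1) ε z := by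
  rcases eq_or_ne z 0 with rfl | hz
  · simpa [softRieszKernelFDeriv] using
      mul_nonneg (abs_nonneg p) (softRieszKernel_nonneg hε (0 : V))
  have hpos : 0 < ‖z‖ ^ 2 + ε := by positivity
  have hsqrt : ‖z‖ ≤ (‖z‖ ^ 2 + ε) ^ (1 / 2 : ℝ) := by
    rw [← Real.sqrt_eq_rpow]
    exact Real.le_sqrt_of_sq_le (by linarith)
  calc ‖softRieszKernelFDeriv p ε z‖ = |p| * (softRieszKernel (p - 2) ε z * ‖z‖) := by
        rw [softRieszKernelFDeriv, norm_smul, innerSL_apply_norm, norm_mul, Real.norm_eq_abs,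
          Real.norm_of_nonneg (softRieszKernel_nonneg hε z), mul_assoc]
    _ ≤ |p| * ((‖z‖ ^ 2 + ε) ^ ((p - 2) / 2) * (‖z‖ ^ 2 + ε) ^ (1 / 2 : ℝ)) := by
        unfold softRieszKernel
        gcongr
    _ = |p| * softRieszKernel (p - 1) ε z := by
        rw [← Real.rpow_add hpos, softRieszKernel]
        ring_nf

lemma norm_softRieszKernelFDeriv_le_rpow (hp : p ≤ 1) (hε : 0 < ε) (z : V) :
    ‖softRieszKernelFDeriv p ε z‖ ≤ |p| * ε ^ ((p - 1) / 2) :=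
  (norm_softRieszKernelFDeriv_le p hε.le z).trans <|
    mul_le_mul_of_nonneg_left (softRieszKernel_le_rpow (by linarith) hε z) (abs_nonneg p)

lemma norm_softRieszKernelFDeriv_sub_le (hp : p ≤ 2) (hs : 0 ≤ s) (hs1 : s ≤ 1) (hε : 0 ≤ ε)
    (z : V) :
    ‖softRieszKernelFDeriv p ε z - softRieszKernelFDeriv p 0 z‖ ≤
      |p| * (2 - p / 2) * ε ^ s * ‖z‖ ^ (p - 1 - 2 * s) := by
  rcases eq_or_ne z 0 with rfl | hz
  · have : 0 ≤ 2 - p / 2 := by linarith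
    simp only [softRieszKernelFDeriv, map_zero, smul_zero, sub_zero, norm_zero]
    positivity
  have hsub : softRieszKernelFDeriv p ε z - softRieszKernelFDeriv p 0 z =
      (p * (softRieszKernel (p - 2) ε z - softRieszKernel (p - 2) 0 z)) • innerSL ℝ z := by
    rw [mul_sub]
    exact (sub_smul _ _ _).symm
  calc ‖softRieszKernelFDeriv p ε z - softRieszKernelFDeriv p 0 z‖
      = |p| * |softRieszKernel (p - 2) ε z - ‖z‖ ^ (p - 2)| * ‖z‖ := by
        rw [hsub, softRieszKernel_zero, norm_smul, innerSL_apply_norm, norm_mul,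
          Real.norm_eq_abs, Real.norm_eq_abs]
    _ ≤ |p| * ((1 - (p - 2) / 2) * ε ^ s * ‖z‖ ^ (p - 2 - 2 * s)) * ‖z‖ := by
        gcongr
        exact abs_softRieszKernel_sub_norm_rpow_le (by linarith) hs hs1 hε hz
    _ = |p| * (2 - p / 2) * ε ^ s * (‖z‖ ^ (p - 2 - 2 * s) * ‖z‖) := by ring
    _ = |p| * (2 - p / 2) * ε ^ s * ‖z‖ ^ (p - 1 - 2 * s) := by
        rw [← Real.rpow_add_one (norm_ne_zero_iff.2 hz)]
        ring_nf

end Kernel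

section Potential

variable {V : Type*} [NormedAddCommGroup V] [MeasurableSpace V] [BorelSpace V] {ν : Measure V}
  {p q s ε : ℝ}

lemma aestronglyMeasurable_softRieszKernel_sub (p ε : ℝ) (x : V) :
    AEStronglyMeasurable (fun y ↦ softRieszKernel p ε (x - y)) ν := by
  unfold softRieszKernel
  exact Measurable.aestronglyMeasurable (by fun_prop)

lemma integrable_norm_sub_rpow_of_le [IsFiniteMeasure ν] (hqp : q ≤ p) (hp : p ≤ 0) {x : V}
    (hint : Integrable (fun y ↦ ‖x - y‖ ^ q) ν) : Integrable (fun y ↦ ‖x - y‖ ^ p) ν :=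
  (hint.add (integrable_const 1)).mono' (Measurable.aestronglyMeasurable (by fun_prop)) <|
    Eventually.of_forall fun y ↦ by
      rw [Real.norm_of_nonneg (by positivity)]
      exact rpow_le_rpow_add_one_of_nonpos hqp hp (norm_nonneg (x - y))

lemma integrable_softRieszKernel_sub [IsFiniteMeasure ν] (hp : p ≤ 0) (hε : 0 < ε) (x : V) :
    Integrable (fun y ↦ softRieszKernel p ε (x - y)) ν :=
  (integrable_const (ε ^ (p / 2))).mono' (aestronglyMeasurable_softRieszKernel_sub p ε x) <|
    Eventually.of_forall fun y ↦ by
      rw [Real.norm_of_nonneg (softRieszKernel_nonneg hε.le _)]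
      exact softRieszKernel_le_rpow hp hε _

lemma tendsto_integral_softRieszKernel [NullSingletonClass ν] (hp : p ≤ 0) {x : V}
    (hint : Integrable (fun y ↦ ‖x - y‖ ^ p) ν) :
    Tendsto (fun ε ↦ ∫ y, softRieszKernel p ε (x - y) ∂ν) (nhdsWithin 0 (Set.Ioi 0))
      (nhds (∫ y, ‖x - y‖ ^ p ∂ν)) := by
  have hne : ∀ᵐ y ∂ν, x - y ≠ 0 := by
    filter_upwards [ν.ae_ne x] with y hy
    exact sub_ne_zero.2 hy.symm
  refine tendsto_integral_filter_of_dominated_convergence _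
    (Eventually.of_forall fun ε ↦ aestronglyMeasurable_softRieszKernel_sub p ε x) ?_ hint ?_
  · filter_upwards [self_mem_nhdsWithin] with ε (hε : 0 < ε)
    filter_upwards [hne] with y hy
    rw [Real.norm_of_nonneg (softRieszKernel_nonneg hε.le _)]
    exact softRieszKernel_le_norm_rpow hp hε.le hy
  · filter_upwards [hne] with y hy
    exact (tendsto_softRieszKernel p hy).mono_left nhdsWithin_le_nhds

variable [InnerProductSpace ℝ V] [SecondCountableTopology V]

lemma aestronglyMeasurable_softRieszKernelFDeriv_sub (p ε : ℝ) (x : V) :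
    AEStronglyMeasurable (fun y ↦ softRieszKernelFDeriv p ε (x - y)) ν := by
  have : SecondCountableTopologyEither V (V →L[ℝ] ℝ) := secondCountableTopologyEither_of_left V _
  have hinner : Continuous fun z : V ↦ innerSL ℝ z := (innerSL ℝ).continuous
  exact ((aestronglyMeasurable_softRieszKernel_sub (p - 2) ε x).const_mul p).smul
    (hinner.comp (continuous_const.sub continuous_id)).aestronglyMeasurable

lemma integrable_softRieszKernelFDeriv_zero_sub {x : V}
    (hint : Integrable (fun y ↦ ‖x - y‖ ^ (p - 1)) ν) :
    Integrable (fun y ↦ softRieszKernelFDeriv p 0 (x - y)) ν :=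
  (hint.const_mul |p|).mono' (aestronglyMeasurable_softRieszKernelFDeriv_sub p 0 x) <|
    Eventually.of_forall fun y ↦ by
      simpa only [softRieszKernel_zero] using norm_softRieszKernelFDeriv_le p le_rfl (x - y)

variable [IsFiniteMeasure ν]

lemma integrable_softRieszKernelFDeriv_sub (hp : p ≤ 1) (hε : 0 < ε) (x : V) :
    Integrable (fun y ↦ softRieszKernelFDeriv p ε (x - y)) ν :=
  (integrable_const _).mono' (aestronglyMeasurable_softRieszKernelFDeriv_sub p ε x) <|
    Eventually.of_forall fun y ↦ norm_softRieszKernelFDeriv_le_rpow hp hε (x - y)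

lemma hasFDerivAt_integral_softRieszKernel (hp : p ≤ 0) (hε : 0 < ε) (x : V) :
    HasFDerivAt (fun x ↦ ∫ y, softRieszKernel p ε (x - y) ∂ν)
      (∫ y, softRieszKernelFDeriv p ε (x - y) ∂ν) x :=
  hasFDerivAt_integral_of_dominated_of_fderiv_le univ_mem
    (Eventually.of_forall fun x ↦ aestronglyMeasurable_softRieszKernel_sub p ε x)
    (integrable_softRieszKernel_sub hp hε x)
    (aestronglyMeasurable_softRieszKernelFDeriv_sub p ε x)
    (Eventually.of_forall fun y x _ ↦
      norm_softRieszKernelFDeriv_le_rpow (by linarith) hε (x - y))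
    (integrable_const _)
    (Eventually.of_forall fun y x _ ↦
      (hasFDerivAt_comp_sub y).2 (hasFDerivAt_softRieszKernel p hε (x - y)))

lemma continuous_integral_softRieszKernelFDeriv (hp : p ≤ 1) (hε : 0 < ε) :
    Continuous fun x ↦ ∫ y, softRieszKernelFDeriv p ε (x - y) ∂ν :=
  continuous_of_dominated (aestronglyMeasurable_softRieszKernelFDeriv_sub p ε)
    (fun x ↦ Eventually.of_forall fun y ↦ norm_softRieszKernelFDeriv_le_rpow hp hε (x - y))
    (integrable_const _)
    (Eventually.of_forall fun _ ↦
      (continuous_softRieszKernelFDeriv p hε).comp (continuous_id.sub continuous_const))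

lemma tendstoUniformly_integral_softRieszKernelFDeriv {C : ℝ} (hp : p ≤ 1) (hs : 0 < s)
    (hs1 : s ≤ 1) (hint : ∀ x : V, Integrable (fun y ↦ ‖x - y‖ ^ (p - 1 - 2 * s)) ν)
    (hC : ∀ x : V, ∫ y, ‖x - y‖ ^ (p - 1 - 2 * s) ∂ν ≤ C) :
    TendstoUniformly (fun ε x ↦ ∫ y, softRieszKernelFDeriv p ε (x - y) ∂ν)
      (fun x ↦ ∫ y, softRieszKernelFDeriv p 0 (x - y) ∂ν) (nhdsWithin 0 (Set.Ioi 0)) := by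
  have hlim : Tendsto (fun ε : ℝ ↦ |p| * (2 - p / 2) * ε ^ s * C) (nhdsWithin 0 (Set.Ioi 0))
      (nhds 0) := by
    have hcont : Continuous fun ε : ℝ ↦ |p| * (2 - p / 2) * ε ^ s * C :=
      ((continuous_id.rpow_const fun _ ↦ Or.inr hs.le).const_mul _).mul_const C
    simpa [hs.ne'] using (hcont.tendsto 0).mono_left nhdsWithin_le_nhds
  rw [Metric.tendstoUniformly_iff]
  intro δ hδ
  filter_upwards [hlim.eventually (gt_mem_nhds hδ), self_mem_nhdsWithin] with ε hεδ (hε : 0 < ε) x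
  have hconst : 0 ≤ |p| * (2 - p / 2) * ε ^ s := by
    have : 0 ≤ 2 - p / 2 := by linarith
    positivity
  refine lt_of_le_of_lt ?_ hεδ
  calc dist (∫ y, softRieszKernelFDeriv p 0 (x - y) ∂ν) (∫ y, softRieszKernelFDeriv p ε (x - y) ∂ν)
      = ‖∫ y, (softRieszKernelFDeriv p ε (x - y) - softRieszKernelFDeriv p 0 (x - y)) ∂ν‖ := by
        rw [dist_comm, dist_eq_norm, integral_sub (integrable_softRieszKernelFDeriv_sub hp hε x)
          (integrable_softRieszKernelFDeriv_zero_sub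
            (integrable_norm_sub_rpow_of_le (by linarith) (by linarith) (hint x)))]
    _ ≤ ∫ y, |p| * (2 - p / 2) * ε ^ s * ‖x - y‖ ^ (p - 1 - 2 * s) ∂ν :=
        norm_integral_le_of_norm_le ((hint x).const_mul _) <| Eventually.of_forall fun y ↦
          norm_softRieszKernelFDeriv_sub_le (by linarith) hs.le hs1 hε.le (x - y)
    _ = |p| * (2 - p / 2) * ε ^ s * ∫ y, ‖x - y‖ ^ (p - 1 - 2 * s) ∂ν := integral_const_mul _ _
    _ ≤ |p| * (2 - p / 2) * ε ^ s * C := mul_le_mul_of_nonneg_left (hC x) hconst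

variable [NullSingletonClass ν]

theorem hasFDerivAt_integral_norm_sub_rpow {C : ℝ} (hp : p ≤ 0) (hs : 0 < s) (hs1 : s ≤ 1)
    (hint : ∀ x : V, Integrable (fun y ↦ ‖x - y‖ ^ (p - 1 - 2 * s)) ν)
    (hC : ∀ x : V, ∫ y, ‖x - y‖ ^ (p - 1 - 2 * s) ∂ν ≤ C) (x : V) :
    HasFDerivAt (fun x ↦ ∫ y, ‖x - y‖ ^ p ∂ν) (∫ y, softRieszKernelFDeriv p 0 (x - y) ∂ν) x := by
  have hunif := tendstoUniformly_integral_softRieszKernelFDeriv (by linarith) hs hs1 hint hC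
  refine hasFDerivAt_of_tendstoUniformlyOnFilter
    (hunif.tendstoUniformlyOnFilter.mono_right le_top) ?_ (Eventually.of_forall fun y ↦
      tendsto_integral_softRieszKernel hp
        (integrable_norm_sub_rpow_of_le (by linarith) hp (hint y)))
  filter_upwards [prod_mem_prod self_mem_nhdsWithin univ_mem] with ⟨ε, y⟩ h
  exact hasFDerivAt_integral_softRieszKernel hp h.1 y

theorem contDiff_one_integral_norm_sub_rpow {C : ℝ} (hp : p ≤ 0) (hs : 0 < s) (hs1 : s ≤ 1)
    (hint : ∀ x : V, Integrable (fun y ↦ ‖x - y‖ ^ (p - 1 - 2 * s)) ν)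
    (hC : ∀ x : V, ∫ y, ‖x - y‖ ^ (p - 1 - 2 * s) ∂ν ≤ C) :
    ContDiff ℝ 1 fun x ↦ ∫ y, ‖x - y‖ ^ p ∂ν := by
  have hunif := tendstoUniformly_integral_softRieszKernelFDeriv (by linarith) hs hs1 hint hC
  have hcont : ∀ᶠ ε in nhdsWithin 0 (Set.Ioi 0),
      Continuous fun x ↦ ∫ y, softRieszKernelFDeriv p ε (x - y) ∂ν := by
    filter_upwards [self_mem_nhdsWithin] with ε hε
    exact continuous_integral_softRieszKernelFDeriv (by linarith) hε
  exact contDiff_one_iff_hasFDerivAt.2 ⟨_, hunif.continuous hcont.frequently,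
    hasFDerivAt_integral_norm_sub_rpow hp hs hs1 hint hC⟩

theorem norm_fderiv_integral_norm_sub_rpow_le {C : ℝ} (hp : p ≤ 0) (hs : 0 < s) (hs1 : s ≤ 1)
    (hint : ∀ x : V, Integrable (fun y ↦ ‖x - y‖ ^ (p - 1 - 2 * s)) ν)
    (hC : ∀ x : V, ∫ y, ‖x - y‖ ^ (p - 1 - 2 * s) ∂ν ≤ C) (x : V) :
    ‖fderiv ℝ (fun x ↦ ∫ y, ‖x - y‖ ^ p ∂ν) x‖ ≤ |p| * ∫ y, ‖x - y‖ ^ (p - 1) ∂ν := by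
  have hint' : Integrable (fun y ↦ ‖x - y‖ ^ (p - 1)) ν :=
    integrable_norm_sub_rpow_of_le (by linarith) (by linarith) (hint x)
  rw [(hasFDerivAt_integral_norm_sub_rpow hp hs hs1 hint hC x).fderiv, ← integral_const_mul]
  refine norm_integral_le_of_norm_le (hint'.const_mul |p|) (Eventually.of_forall fun y ↦ ?_)
  simpa only [softRieszKernel_zero] using norm_softRieszKernelFDeriv_le p le_rfl (x - y)

end Potential

section UniformBound

variable {V : Type*} [NormedAddCommGroup V] {q : ℝ}

lemma norm_rpow_le_indicator_ball_add_one (hq : q ≤ 0) (z : V) :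
    ‖z‖ ^ q ≤ (ball 0 1).indicator (fun z ↦ ‖z‖ ^ q) z + 1 := by
  by_cases hz : z ∈ ball (0 : V) 1
  · simp [hz]
  · have hz' : 1 ≤ ‖z‖ := by simpa using hz
    simpa [hz] using Real.rpow_le_one_of_one_le_of_nonpos hz' hq

variable [NormedSpace ℝ V] [FiniteDimensional ℝ V] [MeasurableSpace V] [BorelSpace V]
  {μ ν : Measure V} [μ.IsAddHaarMeasure]

lemma integrableOn_ball_norm_rpow [Nontrivial V] (hq : -(Module.finrank ℝ V : ℝ) < q) :
    IntegrableOn (fun z : V ↦ ‖z‖ ^ q) (ball 0 1) μ := by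
  refine integrableOn_ball_of_norm_le_rpow (C := 1) (α := -q) Module.finrank_pos (by linarith)
    (Eventually.of_forall fun z ↦ ?_) (Measurable.aestronglyMeasurable (by fun_prop))
  rw [neg_neg, one_mul, Real.norm_of_nonneg (by positivity)]

lemma integrable_indicator_ball_sub [Nontrivial V] (hν : ν ≤ μ)
    (hq : -(Module.finrank ℝ V : ℝ) < q) (x : V) :
    Integrable (fun y ↦ (ball 0 1).indicator (fun z : V ↦ ‖z‖ ^ q) (x - y)) ν :=
  (((integrableOn_ball_norm_rpow hq).integrable_indicator measurableSet_ball).comp_sub_left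
    x).mono_measure hν

variable [IsFiniteMeasure ν]

lemma integrable_norm_sub_rpow [Nontrivial V] (hν : ν ≤ μ)
    (hq : -(Module.finrank ℝ V : ℝ) < q) (hq0 : q ≤ 0) (x : V) :
    Integrable (fun y ↦ ‖x - y‖ ^ q) ν :=
  ((integrable_indicator_ball_sub hν hq x).add (integrable_const 1)).mono'
    (Measurable.aestronglyMeasurable (by fun_prop)) <| Eventually.of_forall fun y ↦ by
      rw [Real.norm_of_nonneg (by positivity)]
      exact norm_rpow_le_indicator_ball_add_one hq0 (x - y)

lemma integral_norm_sub_rpow_le [Nontrivial V] (hν : ν ≤ μ)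
    (hq : -(Module.finrank ℝ V : ℝ) < q) (hq0 : q ≤ 0) (x : V) :
    ∫ y, ‖x - y‖ ^ q ∂ν ≤ ∫ z in ball 0 1, ‖z‖ ^ q ∂μ + ν.real Set.univ := by
  set g : V → ℝ := (ball 0 1).indicator fun z ↦ ‖z‖ ^ q
  have hg : Integrable g μ := (integrableOn_ball_norm_rpow hq).integrable_indicator
    measurableSet_ball
  have hg0 (z : V) : 0 ≤ g z := Set.indicator_nonneg (fun z _ ↦ by positivity) z
  have hgν : Integrable (fun y ↦ g (x - y)) ν := integrable_indicator_ball_sub hν hq x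
  calc ∫ y, ‖x - y‖ ^ q ∂ν ≤ ∫ y, (g (x - y) + 1) ∂ν :=
        integral_mono (integrable_norm_sub_rpow hν hq hq0 x) (hgν.add (integrable_const 1))
          fun y ↦ norm_rpow_le_indicator_ball_add_one hq0 (x - y)
    _ = ∫ y, g (x - y) ∂ν + ν.real Set.univ := by
        rw [integral_add hgν (integrable_const 1), integral_const, smul_eq_mul, mul_one]
    _ ≤ ∫ y, g (x - y) ∂μ + ν.real Set.univ := by
        gcongr
        · exact Eventually.of_forall fun y ↦ hg0 (x - y)
        · exact hg.comp_sub_left x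
    _ = ∫ z in ball 0 1, ‖z‖ ^ q ∂μ + ν.real Set.univ := by
        rw [integral_sub_left_eq_self g μ x, integral_indicator measurableSet_ball]

end UniformBound

theorem statement12_general {V : Type*} [NormedAddCommGroup V] [InnerProductSpace ℝ V]
    [FiniteDimensional ℝ V] [MeasurableSpace V] [BorelSpace V] (μ : Measure V)
    [μ.IsAddHaarMeasure] {p : ℝ} (hp : 1 - (Module.finrank ℝ V : ℝ) < p) (hp0 : p ≤ 0)
    {M : ℝ≥0∞} (hM : M ≠ ∞) :
    ∃ C : ℝ, 0 < C ∧ ∀ ν : Measure V, ν ≤ μ → ν Set.univ ≤ M →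
      ContDiff ℝ 1 (fun x ↦ ∫ y, ‖x - y‖ ^ p ∂ν) ∧
        ∀ x : V, |∫ y, ‖x - y‖ ^ p ∂ν| + ‖fderiv ℝ (fun x ↦ ∫ y, ‖x - y‖ ^ p ∂ν) x‖ ≤ C := by
  have : Nontrivial V := Module.nontrivial_of_finrank_pos (R := ℝ) <| by
    exact_mod_cast (by linarith : (0 : ℝ) < Module.finrank ℝ V)
  obtain ⟨s, hs, hs_lt⟩ := exists_between
    (lt_min one_pos (by linarith : 0 < (p - 1 + Module.finrank ℝ V) / 2))
  obtain ⟨hs1, hsd⟩ := lt_min_iff.1 hs_lt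
  let bound (q : ℝ) : ℝ := ∫ z in ball 0 1, ‖z‖ ^ q ∂μ + M.toReal
  refine ⟨bound p + |p| * bound (p - 1) + 1, by positivity, fun ν hν hνM ↦ ?_⟩
  have : IsFiniteMeasure ν := ⟨hνM.trans_lt hM.lt_top⟩
  have : NullSingletonClass ν := ⟨fun x ↦ hν.absolutelyContinuous (measure_singleton x)⟩
  have hbound {q : ℝ} (hq : -(Module.finrank ℝ V : ℝ) < q) (hq0 : q ≤ 0) (x : V) :
      ∫ y, ‖x - y‖ ^ q ∂ν ≤ bound q :=
    (integral_norm_sub_rpow_le hν hq hq0 x).trans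
      (add_le_add_right (ENNReal.toReal_mono hM hνM) _)
  have hint := integrable_norm_sub_rpow (q := p - 1 - 2 * s) hν (by linarith) (by linarith)
  have hC := hbound (q := p - 1 - 2 * s) (by linarith) (by linarith)
  refine ⟨contDiff_one_integral_norm_sub_rpow hp0 hs hs1.le hint hC, fun x ↦ ?_⟩
  have hvalue : |∫ y, ‖x - y‖ ^ p ∂ν| ≤ bound p := by
    rw [abs_of_nonneg (by positivity)]
    exact hbound (by linarith) hp0 x
  have hderiv : ‖fderiv ℝ (fun x ↦ ∫ y, ‖x - y‖ ^ p ∂ν) x‖ ≤ |p| * bound (p - 1) :=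
    (norm_fderiv_integral_norm_sub_rpow_le hp0 hs hs1.le hint hC x).trans
      (mul_le_mul_of_nonneg_left (hbound (by linarith) (by linarith) x) (abs_nonneg p))
  linarith

/-- For `α ∈ (1, n)` there is `C = C(n, α)` such that for every set `E` of volume `|B|`,
the Riesz potential `Φ_E^α` is `C¹` with `|Φ_E^α| + |∇Φ_E^α| ≤ C` everywhere. -/
theorem statement12 (n : ℕ) (hn : 1 ≤ n) (α : ℝ) (hα1 : 1 < α) (hαn : α < n) :
    ∃ C : ℝ, 0 < C ∧ ∀ E : Set (EuclideanSpace ℝ (Fin n)), MeasurableSet E →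
      volume E = volume (unitBall n) →
        ContDiff ℝ 1 (rieszPotential α E) ∧
        ∀ x : EuclideanSpace ℝ (Fin n),
          |rieszPotential α E x| + ‖fderiv ℝ (rieszPotential α E) x‖ ≤ C := by
  obtain ⟨C, hC, h⟩ := statement12_general (volume : Measure (EuclideanSpace ℝ (Fin n)))
    (p := α - n) (by simpa using hα1) (by linarith) (M := volume (unitBall n))
    measure_ball_lt_top.ne
  exact ⟨C, hC, fun E _ hE ↦ h _ Measure.restrict_le_self (by simpa using hE.le)⟩
end
end
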